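/- arXiv:1907.01210 — 3 statements merged into one kernel-verified Lean document; each statement's English description precedes it below -/
import Mathlib

section
/- If m ≡ 1 or 2 (mod 4) and m, n ≥ 3, then γ_p(f_{n×m}) = 2·⌈(nm - n)/4⌉. -/
abbrev FlowerVert (n m : ℕ) := ZMod n ⊕ ZMod n × Fin (m - 2)

def flowerRel (n m : ℕ) : FlowerVert n m → FlowerVert n m → Prop
  | Sum.inl i, Sum.inl i' => i' = i + 1
  | Sum.inl i, Sum.inr (i', j) => (i' = i ∧ j.val = 0) ∨ (i = i' + 1 ∧ j.val = m - 3)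
  | Sum.inr (i, j), Sum.inr (i', j') => i' = i ∧ j'.val = j.val + 1
  | _, _ => False

/-- The flower graph `f_{n×m}`. -/
def flowerGraph (n m : ℕ) : SimpleGraph (FlowerVert n m) :=
  SimpleGraph.fromRel (flowerRel n m)

/-- `D` is a paired dominating set of `G`. -/
def IsPairedDominating {V : Type*} (G : SimpleGraph V) (D : Set V) : Prop :=
  (∀ v ∉ D, ∃ u ∈ D, G.Adj u v) ∧
  ∃ M : G.Subgraph, M.verts = D ∧ M.IsMatching

/-- `D` is a `k`-distance paired dominating set of `G`. -/
def IsKDistPairedDominating {V : Type*} (G : SimpleGraph V) (k : ℕ) (D : Set V) : Prop :=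
  (∀ v ∉ D, ∃ u ∈ D, G.edist u v ≤ k) ∧
  ∃ M : G.Subgraph, M.verts = D ∧ M.IsMatching

/-- The paired domination number `γ_p(G)`. -/
noncomputable def pairedDomNum {V : Type*} (G : SimpleGraph V) : ℕ :=
  sInf {c | ∃ D : Set V, IsPairedDominating G D ∧ D.ncard = c}

/-- The `k`-distance paired domination number `γ_p^k(G)`. -/
noncomputable def kDistPairedDomNum {V : Type*} (G : SimpleGraph V) (k : ℕ) : ℕ :=
  sInf {c | ∃ D : Set V, IsKDistPairedDominating G k D ∧ D.ncard = c}

/-- The `k`-distance domination number `γ^k(G)`. -/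
noncomputable def kDistDomNum {V : Type*} (G : SimpleGraph V) (k : ℕ) : ℕ :=
  sInf {c | ∃ D : Set V, (∀ v ∉ D, ∃ u ∈ D, G.edist u v ≤ k) ∧ D.ncard = c}

/-!
A paired dominating set `D` has even size and is total dominating. Walking along a petal, total
domination of the vertex at position `j + 1` puts position `j` or `j + 2` in `D`, so `D` meets any
four consecutive positions at least twice. This settles `m = 4k + 1`. For `m = 4k + 2`, count the
`4k + 1` positions of each petal twice, once with the hub vertex at its start and once with the one
at its end; total domination of a hub vertex makes one of the two counts around it at least
`2k + 1`, so that `2|D| ≥ n(4k + 1)`, and the parity of `|D|` does the rest.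

For the upper bound, cover the vertices by paths on four vertices whose middle edges are disjoint:
these edges form a matching, and their endpoints dominate the four vertices of each path. The petals
are cut into such paths, and for `m = 4k + 2` the hub cycle is covered by `⌈n / 4⌉` more.
-/

section PairedDomination

variable {V : Type*} {G : SimpleGraph V}

theorem pairedDomNum_le {D : Set V} (hD : IsPairedDominating G D) : pairedDomNum G ≤ D.ncard :=
  Nat.sInf_le ⟨D, hD, rfl⟩

theorem IsPairedDominating.exists_ncard_eq_pairedDomNum {D : Set V} (hD : IsPairedDominating G D) :
    ∃ D', IsPairedDominating G D' ∧ D'.ncard = pairedDomNum G :=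
  Nat.sInf_mem (s := {c | ∃ D', IsPairedDominating G D' ∧ D'.ncard = c}) ⟨D.ncard, D, hD, rfl⟩

/-- `D` is a total dominating set of `G`: every vertex, including those of `D`, has a neighbour in
`D`. The counting in the lower bound rests on this weakening of paired domination. -/
def IsTotalDominating (G : SimpleGraph V) (D : Set V) : Prop :=
  ∀ v, ∃ u ∈ D, G.Adj u v

theorem IsPairedDominating.isTotalDominating {D : Set V} (hD : IsPairedDominating G D) :
    IsTotalDominating G D := by
  obtain ⟨hdom, M, rfl, hM⟩ := hD
  intro v
  by_cases hv : v ∈ M.verts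
  · obtain ⟨w, hvw, -⟩ := hM hv
    exact ⟨w, hvw.snd_mem, hvw.adj_sub.symm⟩
  · exact hdom v hv

theorem IsPairedDominating.even_ncard [Finite V] {D : Set V} (hD : IsPairedDominating G D) :
    Even D.ncard := by
  obtain ⟨-, M, rfl, hM⟩ := hD
  have := Fintype.ofFinite M.verts
  rw [Set.ncard_eq_toFinset_card']
  exact hM.even_card

theorem exists_isPairedDominating_of_path_cover {ι : Type*} [Fintype ι] {P : ι → ℕ → V}
    (hadj : ∀ a, ∀ b < 3, G.Adj (P a b) (P a (b + 1))) (hcover : ∀ v, ∃ a, ∃ b < 4, P a b = v)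
    (hinj : Set.InjOn (Function.uncurry P) (Set.univ ×ˢ {1, 2})) :
    ∃ D, IsPairedDominating G D ∧ D.ncard ≤ 2 * Fintype.card ι := by
  have hinj₁ : Function.Injective (P · 1) := fun a a' h =>
    congrArg Prod.fst (@hinj (a, 1) (by simp) (a', 1) (by simp) h)
  have hinj₂ : Function.Injective (P · 2) := fun a a' h =>
    congrArg Prod.fst (@hinj (a, 2) (by simp) (a', 2) (by simp) h)
  have hdisj : Disjoint (Set.range (P · 1)) (Set.range (P · 2)) := by
    rw [Set.disjoint_range_iff]
    intro a a' h
    simpa using @hinj (a, 1) (by simp) (a', 2) (by simp) h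
  let e := (Equiv.ofInjective _ hinj₁).symm.trans (Equiv.ofInjective _ hinj₂)
  have he : ∀ v, G.Adj v.1 (e v).1 := by
    rw [(Equiv.ofInjective _ hinj₁).surjective.forall]
    intro a
    simpa [e] using hadj a 1 (by simp)
  refine ⟨Set.range (P · 1) ∪ Set.range (P · 2), ⟨fun v hv => ?_,
    SimpleGraph.Subgraph.IsMatching.exists_of_disjoint_sets_of_equiv hdisj e he⟩, ?_⟩
  · obtain ⟨a, b, hb, rfl⟩ := hcover v
    interval_cases b
    · exact ⟨_, Or.inl ⟨a, rfl⟩, (hadj a 0 (by simp)).symm⟩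
    · exact absurd (Or.inl ⟨a, rfl⟩) hv
    · exact absurd (Or.inr ⟨a, rfl⟩) hv
    · exact ⟨_, Or.inr ⟨a, rfl⟩, hadj a 2 (by simp)⟩
  · refine (Set.ncard_union_le _ _).trans_eq ?_
    rw [← Set.image_univ, ← Set.image_univ, Set.ncard_image_of_injective _ hinj₁,
      Set.ncard_image_of_injective _ hinj₂, Set.ncard_univ, Nat.card_eq_fintype_card, two_mul]

end PairedDomination

theorem two_mul_le_count_four_mul {p : ℕ → Prop} [DecidablePred p] {k : ℕ}
    (hp : ∀ j, j + 2 < 4 * k → p j ∨ p (j + 2)) : 2 * k ≤ Nat.count p (4 * k) := by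
  induction k with
  | zero => simp
  | succ k ih =>
    have hk := ih fun j hj => hp j (by omega)
    have h₀ := hp (4 * k) (by omega)
    have h₁ := hp (4 * k + 1) (by omega)
    simp only [Nat.mul_succ, Nat.count_succ]
    grind

theorem two_mul_lt_count_four_mul_add_one {p : ℕ → Prop} [DecidablePred p] {k : ℕ}
    (hp : ∀ j, j + 2 ≤ 4 * k → p j ∨ p (j + 2)) (hends : p 0 ∨ p (4 * k)) :
    2 * k < Nat.count p (4 * k + 1) := by
  obtain h₀ | hlast := hends
  · have hshift : 2 * k ≤ Nat.count (fun j => p (j + 1)) (4 * k) :=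
      two_mul_le_count_four_mul fun j hj => hp (j + 1) (by omega)
    rw [Nat.count_succ', if_pos h₀]
    omega
  · have hinit : 2 * k ≤ Nat.count p (4 * k) :=
      two_mul_le_count_four_mul fun j hj => hp j (by omega)
    rw [Nat.count_succ, if_pos hlast]
    omega

section Flower

variable {n m : ℕ}

/-- The vertices of the `i`-th petal in cyclic order: position `0` is `u_i`, position `j` is
`v_{i,j}` (that is, `Sum.inr (i, j - 1)`) for `1 ≤ j ≤ m - 2`, and position `m - 1`, like all later
ones, is `u_{i+1}`. -/
def petalVert (m : ℕ) (i : ZMod n) : ℕ → FlowerVert n m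
  | 0 => Sum.inl i
  | j + 1 => if h : j < m - 2 then Sum.inr (i, ⟨j, h⟩) else Sum.inl (i + 1)

theorem petalVert_zero (i : ZMod n) : petalVert m i 0 = Sum.inl i := rfl

theorem petalVert_succ_of_lt {j : ℕ} (hj : j < m - 2) (i : ZMod n) :
    petalVert m i (j + 1) = Sum.inr (i, ⟨j, hj⟩) :=
  dif_pos hj

theorem petalVert_succ_of_le {j : ℕ} (hj : m - 2 ≤ j) (i : ZMod n) :
    petalVert m i (j + 1) = Sum.inl (i + 1) :=
  dif_neg hj.not_gt

theorem petalVert_succ_inj {i i' : ZMod n} {j j' : ℕ} (hj : j < m - 2) (hj' : j' < m - 2) :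
    petalVert m i (j + 1) = petalVert m i' (j' + 1) ↔ i = i' ∧ j = j' := by
  simp [petalVert_succ_of_lt, hj, hj']

theorem exists_petalVert_eq (v : FlowerVert n m) : ∃ i, ∃ j ≤ m - 2, petalVert m i j = v := by
  obtain i | ⟨i, x⟩ := v
  · exact ⟨i, 0, by simp, rfl⟩
  · exact ⟨i, x + 1, x.2, petalVert_succ_of_lt x.2 i⟩

theorem flowerGraph_adj_inl_inl_add_one (hn : n ≠ 1) (i : ZMod n) :
    (flowerGraph n m).Adj (Sum.inl i) (Sum.inl (i + 1)) := by
  have := ZMod.nontrivial_iff.2 hn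
  simp [flowerGraph, flowerRel]

theorem flowerGraph_adj_petalVert_succ (hm : 3 ≤ m) (i : ZMod n) {j : ℕ} (hj : j ≤ m - 2) :
    (flowerGraph n m).Adj (petalVert m i j) (petalVert m i (j + 1)) := by
  rw [flowerGraph, SimpleGraph.fromRel_adj]
  obtain _ | j := j
  · simp [petalVert_zero, petalVert_succ_of_lt (show 0 < m - 2 by omega), flowerRel]
  rw [petalVert_succ_of_lt (show j < m - 2 by omega)]
  obtain hj' | hj' := lt_or_ge (j + 1) (m - 2)
  · simp [petalVert_succ_of_lt hj', flowerRel]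
  · have hlast : j = m - 3 := by omega
    rw [petalVert_succ_of_le hj']
    exact ⟨Sum.inr_ne_inl, Or.inr (Or.inr ⟨rfl, hlast⟩)⟩

theorem eq_or_eq_of_flowerGraph_adj_petalVert_succ {i : ZMod n} {j : ℕ} (hj : j < m - 2)
    {u : FlowerVert n m} (hu : (flowerGraph n m).Adj u (petalVert m i (j + 1))) :
    u = petalVert m i j ∨ u = petalVert m i (j + 2) := by
  rw [petalVert_succ_of_lt hj, flowerGraph, SimpleGraph.fromRel_adj] at hu
  obtain i' | ⟨i', x⟩ := u
  · obtain ⟨rfl, rfl⟩ | ⟨rfl, h⟩ : (i = i' ∧ j = 0) ∨ (i' = i + 1 ∧ j = m - 3) := by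
      simpa [flowerRel] using hu.2
    · exact Or.inl rfl
    · exact Or.inr (petalVert_succ_of_le (by omega) i).symm
  · obtain ⟨rfl, rfl⟩ | ⟨rfl, h⟩ : (i = i' ∧ j = x + 1) ∨ (i' = i ∧ x = j + 1) := by
      simpa [flowerRel] using hu.2
    · exact Or.inl (petalVert_succ_of_lt x.2 i).symm
    · right
      have := x.2
      rw [petalVert_succ_of_lt (show j + 1 < m - 2 by omega)]
      simp [Fin.ext_iff, h]

theorem eq_petalVert_of_flowerGraph_adj_petalVert_zero (hm : 3 ≤ m) {i : ZMod n}
    {u : FlowerVert n m} (hu : (flowerGraph n m).Adj u (petalVert m (i + 1) 0)) :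
    (u = petalVert m i 0 ∨ u = petalVert m i (m - 2)) ∨
      u = petalVert m (i + 1) 1 ∨ u = petalVert m (i + 1) (m - 1) := by
  rw [petalVert_zero, flowerGraph, SimpleGraph.fromRel_adj] at hu
  rw [show m - 2 = m - 3 + 1 by omega, show m - 1 = m - 2 + 1 by omega, petalVert_zero,
    petalVert_succ_of_lt (by omega), petalVert_succ_of_lt (by omega), petalVert_succ_of_le le_rfl]
  obtain i' | ⟨i', x⟩ := u
  · obtain rfl | rfl : i = i' ∨ i' = i + 1 + 1 := by
      simpa [flowerRel] using hu.2
    · simp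
    · simp
  · obtain ⟨rfl, h⟩ | ⟨rfl, h⟩ : (i' = i + 1 ∧ (x : ℕ) = 0) ∨ (i = i' ∧ (x : ℕ) = m - 3) := by
      simpa [flowerRel] using hu.2
    · simp [Fin.ext_iff, h]
    · simp [Fin.ext_iff, h]

theorem IsTotalDominating.petalVert_mem_or {D : Set (FlowerVert n m)}
    (hD : IsTotalDominating (flowerGraph n m) D) (i : ZMod n) {j : ℕ} (hj : j < m - 2) :
    petalVert m i j ∈ D ∨ petalVert m i (j + 2) ∈ D := by
  obtain ⟨u, hu, hadj⟩ := hD (petalVert m i (j + 1))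
  obtain rfl | rfl := eq_or_eq_of_flowerGraph_adj_petalVert_succ hj hadj
  · exact Or.inl hu
  · exact Or.inr hu

theorem IsTotalDominating.petalVert_ends_mem_or (hm : 3 ≤ m) {D : Set (FlowerVert n m)}
    (hD : IsTotalDominating (flowerGraph n m) D) (i : ZMod n) :
    (petalVert m i 0 ∈ D ∨ petalVert m i (m - 2) ∈ D) ∨
      petalVert m (i + 1) 1 ∈ D ∨ petalVert m (i + 1) (m - 1) ∈ D := by
  obtain ⟨u, hu, hadj⟩ := hD (petalVert m (i + 1) 0)
  obtain (rfl | rfl) | rfl | rfl := eq_petalVert_of_flowerGraph_adj_petalVert_zero hm hadj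
  · exact Or.inl (Or.inl hu)
  · exact Or.inl (Or.inr hu)
  · exact Or.inr (Or.inl hu)
  · exact Or.inr (Or.inr hu)

open Classical in
theorem ncard_eq_sum_count_petalVert [NeZero n] (hm : 2 ≤ m) (D : Set (FlowerVert n m)) :
    D.ncard = ∑ i, Nat.count (petalVert m i · ∈ D) (m - 1) := by
  obtain ⟨l, rfl⟩ : ∃ l, m = l + 2 := ⟨m - 2, by omega⟩
  have hcount (i : ZMod n) : Nat.count (petalVert (l + 2) i · ∈ D) (l + 1)
      = (∑ x : Fin l, if Sum.inr (i, x) ∈ D then 1 else 0) + if Sum.inl i ∈ D then 1 else 0 := by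
    rw [Nat.count_succ', Nat.count_eq_card_filter_range, Finset.card_filter, Finset.sum_range]
    congr 1
    exact Finset.sum_congr rfl fun x _ => by rw [petalVert_succ_of_lt x.2]; rfl
  calc D.ncard = ∑ v, if v ∈ D then 1 else 0 := by
        rw [← Finset.card_filter, ← Set.ncard_coe_finset, Finset.coe_filter_univ]
        rfl
    _ = ∑ i, Nat.count (petalVert (l + 2) i · ∈ D) (l + 1) := by
        rw [Fintype.sum_sum_type, Fintype.sum_prod_type, add_comm, ← Finset.sum_add_distrib]
        exact Finset.sum_congr rfl fun i _ => (hcount i).symm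

open Classical in
theorem ncard_eq_sum_count_petalVert_succ [NeZero n] (hm : 2 ≤ m) (D : Set (FlowerVert n m)) :
    D.ncard = ∑ i, Nat.count (fun j => petalVert m i (j + 1) ∈ D) (m - 1) := by
  obtain ⟨l, rfl⟩ : ∃ l, m = l + 2 := ⟨m - 2, by omega⟩
  let inner (i : ZMod n) : ℕ := Nat.count (fun j => petalVert (l + 2) i (j + 1) ∈ D) l
  let hub (i : ZMod n) : ℕ := if Sum.inl i ∈ D then 1 else 0
  have hfirst (i : ZMod n) : Nat.count (petalVert (l + 2) i · ∈ D) (l + 1) = inner i + hub i :=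
    Nat.count_succ' _ l
  have hlast (i : ZMod n) :
      Nat.count (fun j => petalVert (l + 2) i (j + 1) ∈ D) (l + 1) = inner i + hub (i + 1) := by
    simp only [Nat.count_succ, petalVert_succ_of_le (show l + 2 - 2 ≤ l by simp), inner, hub]
  calc D.ncard = ∑ i, Nat.count (petalVert (l + 2) i · ∈ D) (l + 1) :=
        ncard_eq_sum_count_petalVert hm D
    _ = ∑ i, inner i + ∑ i, hub i := by simp only [hfirst, Finset.sum_add_distrib]
    _ = ∑ i, inner i + ∑ i, hub (i + 1) := by rw [← Equiv.sum_comp (Equiv.addRight 1) hub]; rfl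
    _ = ∑ i, Nat.count (fun j => petalVert (l + 2) i (j + 1) ∈ D) (l + 1) := by
        simp only [hlast, Finset.sum_add_distrib]

theorem IsTotalDominating.le_ncard_four_mul_add_one [NeZero n] {k : ℕ} (hk : k ≠ 0)
    {D : Set (FlowerVert n (4 * k + 1))} (hD : IsTotalDominating (flowerGraph n (4 * k + 1)) D) :
    2 * (n * k) ≤ D.ncard := by
  classical
  have hcount (i : ZMod n) : 2 * k ≤ Nat.count (petalVert (4 * k + 1) i · ∈ D) (4 * k) :=
    two_mul_le_count_four_mul fun j hj => hD.petalVert_mem_or i (by omega)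
  calc 2 * (n * k) = ∑ _i : ZMod n, 2 * k := by simp [ZMod.card, mul_left_comm]
    _ ≤ ∑ i : ZMod n, Nat.count (petalVert (4 * k + 1) i · ∈ D) (4 * k) :=
        Finset.sum_le_sum fun i _ => hcount i
    _ = D.ncard := (ncard_eq_sum_count_petalVert (by omega) D).symm

theorem IsTotalDominating.le_two_mul_ncard_four_mul_add_two [NeZero n] {k : ℕ} (hk : k ≠ 0)
    {D : Set (FlowerVert n (4 * k + 2))} (hD : IsTotalDominating (flowerGraph n (4 * k + 2)) D) :
    n * (4 * k + 1) ≤ 2 * D.ncard := by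
  classical
  let c (i : ZMod n) : ℕ := Nat.count (petalVert (4 * k + 2) i · ∈ D) (4 * k + 1)
  let c' (i : ZMod n) : ℕ := Nat.count (fun j => petalVert (4 * k + 2) i (j + 1) ∈ D) (4 * k + 1)
  have hpath (i : ZMod n) (j : ℕ) (hj : j < 4 * k) := hD.petalVert_mem_or i hj
  have hcount (i : ZMod n) : 4 * k + 1 ≤ c i + c' (i + 1) := by
    have hc : 2 * k ≤ c i :=
      (two_mul_le_count_four_mul fun j hj => hpath i j (by omega)).trans
        (Nat.count_monotone _ (Nat.le_succ _))
    have hc' : 2 * k ≤ c' (i + 1) :=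
      (two_mul_le_count_four_mul fun j hj => hpath (i + 1) (j + 1) (by omega)).trans
        (Nat.count_monotone _ (Nat.le_succ _))
    obtain hends | hends := hD.petalVert_ends_mem_or (by omega) i
    · have : 2 * k < c i :=
        two_mul_lt_count_four_mul_add_one (fun j hj => hpath i j (by omega)) hends
      omega
    · have : 2 * k < c' (i + 1) :=
        two_mul_lt_count_four_mul_add_one (fun j hj => hpath (i + 1) (j + 1) (by omega)) hends
      omega
  calc n * (4 * k + 1) = ∑ _i : ZMod n, (4 * k + 1) := by simp [ZMod.card]
    _ ≤ ∑ i, (c i + c' (i + 1)) := Finset.sum_le_sum fun i _ => hcount i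
    _ = ∑ i, c i + ∑ i, c' i := by
        rw [Finset.sum_add_distrib, ← Equiv.sum_comp (Equiv.addRight 1) c']
        rfl
    _ = 2 * D.ncard := by
        rw [two_mul]
        nth_rw 1 [ncard_eq_sum_count_petalVert (by omega) D]
        rw [ncard_eq_sum_count_petalVert_succ (by omega) D]
        rfl

/-- For `a = (i, t)` and `b < 4`, the `b`-th vertex of the `t`-th block of four consecutive vertices
of the `i`-th petal, the blocks starting from position `c`. The values at `b ≥ 4` are not used. -/
def petalPath (m c : ℕ) {k : ℕ} (a : ZMod n × Fin k) (b : ℕ) : FlowerVert n m :=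
  petalVert m a.1 (4 * a.2 + c + b)

/-- For `b < 4`, the `b`-th vertex of the `t`-th block of four consecutive hub vertices. The block
starts from `u_{4t}`, or from `u_{n-3}` if `4t > n - 3`: the last block may overlap the previous one
or run into `u_0`, but the middle edges stay disjoint. The values at `b ≥ 4` are not used. -/
def hubPath (n m : ℕ) {q : ℕ} (t : Fin q) (b : ℕ) : FlowerVert n m :=
  Sum.inl ((min (4 * (t : ℕ)) (n - 3) + b : ℕ) : ZMod n)

theorem flowerGraph_adj_petalPath (hm : 3 ≤ m) {k c : ℕ} (hc : 4 * k + c ≤ m)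
    (a : ZMod n × Fin k) {b : ℕ} (hb : b < 3) :
    (flowerGraph n m).Adj (petalPath m c a b) (petalPath m c a (b + 1)) :=
  flowerGraph_adj_petalVert_succ hm a.1 (by omega)

theorem flowerGraph_adj_hubPath (hn : n ≠ 1) {q : ℕ} (t : Fin q) (b : ℕ) :
    (flowerGraph n m).Adj (hubPath n m t b) (hubPath n m t (b + 1)) := by
  simpa [hubPath, add_assoc] using
    flowerGraph_adj_inl_inl_add_one hn ((min (4 * (t : ℕ)) (n - 3) + b : ℕ) : ZMod n)

theorem petalPath_injOn {k c : ℕ} (hc : 4 * k + c ≤ m) :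
    Set.InjOn (Function.uncurry (petalPath m c : ZMod n × Fin k → ℕ → FlowerVert n m))
      (Set.univ ×ˢ {1, 2}) := by
  rintro ⟨⟨i, t⟩, b⟩ hb ⟨⟨i', t'⟩, b'⟩ hb' h
  simp only [Set.mem_prod, Set.mem_univ, Set.mem_insert_iff, Set.mem_singleton_iff,
    true_and] at hb hb'
  obtain ⟨b, rfl⟩ : ∃ d, b = d + 1 := ⟨b - 1, by omega⟩
  obtain ⟨b', rfl⟩ : ∃ d, b' = d + 1 := ⟨b' - 1, by omega⟩
  have hj : 4 * t + c + b < m - 2 := by omega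
  have hj' : 4 * t' + c + b' < m - 2 := by omega
  obtain ⟨rfl, h⟩ := (petalVert_succ_inj hj hj').1 h
  simp only [Prod.mk.injEq, Fin.ext_iff, true_and]
  omega

theorem hubPath_injOn (hn : 3 ≤ n) :
    Set.InjOn (Function.uncurry (hubPath n m : Fin ((n + 3) / 4) → ℕ → FlowerVert n m))
      (Set.univ ×ˢ {1, 2}) := by
  rintro ⟨t, b⟩ hb ⟨t', b'⟩ hb' h
  simp only [Set.mem_prod, Set.mem_univ, Set.mem_insert_iff, Set.mem_singleton_iff,
    true_and] at hb hb'
  simp only [Function.uncurry_apply_pair, hubPath, Sum.inl.injEq] at h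
  rw [ZMod.natCast_eq_natCast_iff', Nat.mod_eq_of_lt (by omega), Nat.mod_eq_of_lt (by omega)] at h
  simp only [Prod.mk.injEq, Fin.ext_iff]
  omega

theorem petalPath_ne_hubPath {k c q : ℕ} (hc : 4 * k + c ≤ m) (a : ZMod n × Fin k) (t : Fin q)
    {b : ℕ} (hb : b ∈ ({1, 2} : Set ℕ)) (b' : ℕ) : petalPath m c a b ≠ hubPath n m t b' := by
  obtain ⟨d, rfl, hd⟩ : ∃ d, b = d + 1 ∧ d ≤ 1 := by
    obtain rfl | rfl := hb
    · exact ⟨0, rfl, zero_le_one⟩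
    · exact ⟨1, rfl, le_rfl⟩
  have hj : 4 * a.2 + c + d < m - 2 := by omega
  rw [petalPath, ← add_assoc, petalVert_succ_of_lt hj]
  exact Sum.inr_ne_inl

theorem petalPath_div_mod (c : ℕ) {k j : ℕ} (i : ZMod n) (hj : j / 4 < k) :
    petalPath m c (i, (⟨j / 4, hj⟩ : Fin k)) (j % 4) = petalVert m i (j + c) := by
  rw [petalPath, add_right_comm, Nat.div_add_mod]

theorem exists_hubPath_eq (hn : 3 ≤ n) (i : ZMod n) :
    ∃ t : Fin ((n + 3) / 4), ∃ b < 4, hubPath n m t b = Sum.inl i := by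
  have : NeZero n := ⟨by omega⟩
  have hi := i.val_lt
  refine ⟨⟨i.val / 4, by omega⟩, i.val - min (4 * (i.val / 4)) (n - 3), by omega, ?_⟩
  have hle : min (4 * (i.val / 4)) (n - 3) ≤ i.val := by omega
  rw [hubPath, Nat.add_sub_cancel' hle, ZMod.natCast_zmod_val]

theorem exists_isPairedDominating_flowerGraph_four_mul_add_one {k : ℕ} (hn : n ≠ 0) (hk : k ≠ 0) :
    ∃ D, IsPairedDominating (flowerGraph n (4 * k + 1)) D ∧ D.ncard ≤ 2 * (n * k) := by
  have : NeZero n := ⟨hn⟩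
  have hadj (a : ZMod n × Fin k) (b : ℕ) (hb : b < 3) :
      (flowerGraph n (4 * k + 1)).Adj (petalPath _ 0 a b) (petalPath _ 0 a (b + 1)) :=
    flowerGraph_adj_petalPath (by omega) (by omega) a hb
  have hcover (v : FlowerVert n (4 * k + 1)) :
      ∃ a : ZMod n × Fin k, ∃ b < 4, petalPath _ 0 a b = v := by
    obtain ⟨i, j, hj, rfl⟩ := exists_petalVert_eq v
    exact ⟨_, _, Nat.mod_lt _ (by omega), petalPath_div_mod 0 i (by omega)⟩
  simpa [ZMod.card] using exists_isPairedDominating_of_path_cover hadj hcover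
    (petalPath_injOn (by omega))

theorem exists_isPairedDominating_flowerGraph_four_mul_add_two {k : ℕ} (hn : 3 ≤ n) (hk : k ≠ 0) :
    ∃ D, IsPairedDominating (flowerGraph n (4 * k + 2)) D ∧
      D.ncard ≤ 2 * (n * k + (n + 3) / 4) := by
  have : NeZero n := ⟨by omega⟩
  let P : (ZMod n × Fin k) ⊕ Fin ((n + 3) / 4) → ℕ → FlowerVert n (4 * k + 2) :=
    Sum.elim (petalPath (4 * k + 2) 1) (hubPath n (4 * k + 2))
  have hadj (a) (b : ℕ) (hb : b < 3) : (flowerGraph n (4 * k + 2)).Adj (P a b) (P a (b + 1)) := by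
    obtain a | t := a
    · exact flowerGraph_adj_petalPath (by omega) (by omega) a hb
    · exact flowerGraph_adj_hubPath (by omega) t b
  have hcover (v : FlowerVert n (4 * k + 2)) : ∃ a, ∃ b < 4, P a b = v := by
    obtain i | ⟨i, x⟩ := v
    · obtain ⟨t, b, hb, h⟩ := exists_hubPath_eq hn i
      exact ⟨Sum.inr t, b, hb, h⟩
    · exact ⟨Sum.inl _, _, Nat.mod_lt _ (by omega),
        (petalPath_div_mod 1 i (by omega)).trans (petalVert_succ_of_lt x.2 i)⟩
  have hinj : Set.InjOn (Function.uncurry P) (Set.univ ×ˢ {1, 2}) := by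
    have hc : 4 * k + 1 ≤ 4 * k + 2 := Nat.le_succ _
    rintro ⟨a | t, b⟩ ⟨-, hb⟩ ⟨a' | t', b'⟩ ⟨-, hb'⟩ h
    · obtain ⟨rfl, rfl⟩ : a = a' ∧ b = b' := Prod.mk.inj <|
        petalPath_injOn hc ⟨trivial, hb⟩ ⟨trivial, hb'⟩ h
      rfl
    · exact absurd h (petalPath_ne_hubPath hc a t' hb b')
    · exact absurd h.symm (petalPath_ne_hubPath hc a' t hb' b)
    · obtain ⟨rfl, rfl⟩ : t = t' ∧ b = b' := Prod.mk.inj <|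
        hubPath_injOn hn ⟨trivial, hb⟩ ⟨trivial, hb'⟩ h
      rfl
  simpa [ZMod.card] using exists_isPairedDominating_of_path_cover hadj hcover hinj

theorem pairedDomNum_flowerGraph_four_mul_add_one {k : ℕ} (hn : n ≠ 0) (hk : k ≠ 0) :
    pairedDomNum (flowerGraph n (4 * k + 1)) = 2 * (n * k) := by
  have : NeZero n := ⟨hn⟩
  obtain ⟨D, hD, hcard⟩ := exists_isPairedDominating_flowerGraph_four_mul_add_one hn hk
  obtain ⟨D', hD', hcard'⟩ := hD.exists_ncard_eq_pairedDomNum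
  have hlower := hD'.isTotalDominating.le_ncard_four_mul_add_one hk
  have hupper := pairedDomNum_le hD
  omega

theorem pairedDomNum_flowerGraph_four_mul_add_two {k : ℕ} (hn : 3 ≤ n) (hk : k ≠ 0) :
    pairedDomNum (flowerGraph n (4 * k + 2)) = 2 * (n * k + (n + 3) / 4) := by
  have : NeZero n := ⟨by omega⟩
  obtain ⟨D, hD, hcard⟩ := exists_isPairedDominating_flowerGraph_four_mul_add_two hn hk
  obtain ⟨D', hD', hcard'⟩ := hD.exists_ncard_eq_pairedDomNum
  have hlower : 4 * (n * k) + n ≤ 2 * D'.ncard := by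
    linarith [hD'.isTotalDominating.le_two_mul_ncard_four_mul_add_two hk]
  have hupper := pairedDomNum_le hD
  obtain ⟨q, hq⟩ := hD'.even_ncard
  omega

end Flower

theorem flower_pairedDomNum_mod4_12 (n m : ℕ) (hn : 3 ≤ n) (hm : 3 ≤ m)
    (h : m % 4 = 1 ∨ m % 4 = 2) :
    (pairedDomNum (flowerGraph n m) : ℤ) = 2 * ⌈((n : ℚ) * m - n) / 4⌉ := by
  obtain ⟨k, hk, rfl | rfl⟩ : ∃ k ≠ 0, m = 4 * k + 1 ∨ m = 4 * k + 2 := ⟨m / 4, by omega, by omega⟩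
  · have hceil : ⌈((n : ℚ) * (4 * k + 1 : ℕ) - n) / 4⌉ = (n * k : ℕ) := by
      rw [Int.ceil_eq_iff]
      push_cast
      constructor <;> linarith
    rw [hceil, pairedDomNum_flowerGraph_four_mul_add_one (by omega) hk]
    norm_cast
  · have hceil : ⌈((n : ℚ) * (4 * k + 2 : ℕ) - n) / 4⌉ = (n * k + (n + 3) / 4 : ℕ) := by
      have hlt : (4 * ((n + 3) / 4 : ℕ) : ℚ) < n + 4 := by exact_mod_cast (by omega)
      have hle : (n : ℚ) ≤ 4 * ((n + 3) / 4 : ℕ) := by exact_mod_cast (by omega)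
      rw [Int.ceil_eq_iff, Int.cast_natCast]
      push_cast
      constructor <;> linarith
    rw [hceil, pairedDomNum_flowerGraph_four_mul_add_two hn hk]
    norm_cast
end

section
/- If m ≡ 3 (mod 4) and m, n ≥ 3, then γ_p(f_{n×m}) = 2·⌈(3nm - 5n)/12⌉. -/
/-!
Write `m = 4 * k + 3`, so that each petal is a path on `4 * k + 1` vertices.

*Lower bound.* Every vertex has a neighbor in a paired dominating set `D`. A pair of `D` inside a
petal is adjacent to at most four of its vertices, and each of the two centers at its ends accounts
for at most two more (the first vertex of the petal and, if the center is matched to that vertex,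
the second). Hence every petal contains `k` pairs; if it has just `2 * k` vertices in `D`, then one
of its two centers is in `D` and no center is matched into it. Give every vertex of `D` three units
of charge. A petal keeps the charge of its vertices, while a center gives one unit to the petal on
the side of its partner and two units to the other one. Then every petal has charge at least
`6 * k + 2`, so that `n * (6 * k + 2) ≤ 3 * |D|`, and `|D|` is even.

*Upper bound.* Choose at most `⌈n / 3⌉` indices, no two cyclically consecutive, meeting any three
consecutive ones, and pair `u_i` with `u_{i+1}` for each chosen `i`. Every petal then has a paired
center at one of its ends, and `k` pairs dominate its other `4 * k` vertices.
-/

theorem ceil_natCast_div_natCast {K : Type*} [Field K] [LinearOrder K] [IsStrictOrderedRing K]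
    [FloorRing K] (a b : ℕ) : ⌈(a : K) / b⌉ = (a ⌈/⌉ b : ℕ) := by
  obtain rfl | hb := b.eq_zero_or_pos
  · simp
  have hnat : ⌈(a : K) / b⌉₊ = a ⌈/⌉ b := eq_of_forall_ge_iff fun c ↦ by
    rw [Nat.ceil_le, div_le_iff₀' (by exact_mod_cast hb), ceilDiv_le_iff_le_mul hb]
    norm_cast
  rw [← hnat, Int.natCast_ceil_eq_ceil (by positivity)]

theorem zmod_val_add_one {n : ℕ} [NeZero n] (i : ZMod n) :
    (i + 1).val = if i.val + 1 = n then 0 else i.val + 1 := by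
  have hlt := i.val_lt
  rw [ZMod.val_add, ZMod.val_one_eq_one_mod, Nat.add_mod_mod]
  split_ifs with h
  · rw [h, Nat.mod_self]
  · exact Nat.mod_eq_of_lt (by omega)

theorem exists_spaced_finset_zmod {n : ℕ} (hn : 1 < n) :
    ∃ S : Finset (ZMod n), S.card ≤ n ⌈/⌉ 3 ∧ (∀ i ∈ S, i + 1 ∉ S) ∧
      ∀ i, i ∈ S ∨ i + 1 ∈ S ∨ i + 1 + 1 ∈ S := by
  have : NeZero n := ⟨by omega⟩
  -- If `n % 3 = 1`, the residue `n - 1` repairs the gap between `n - 3` and `1 = n + 1`.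
  let S : Finset (ZMod n) := {i | i.val % 3 = 1 ∨ (n % 3 = 1 ∧ i.val + 1 = n)}
  have hS (i : ZMod n) : i ∈ S ↔ i.val % 3 = 1 ∨ (n % 3 = 1 ∧ i.val + 1 = n) := by simp [S]
  refine ⟨S, ?_, fun i hi hi' ↦ ?_, fun i ↦ ?_⟩
  · rw [Nat.ceilDiv_eq_add_pred_div, ← Finset.card_range ((n + 3 - 1) / 3)]
    refine Finset.card_le_card_of_injOn (fun i ↦ i.val / 3) (fun i hi ↦ ?_) fun i hi j hj hij ↦ ?_
    · have hlt := i.val_lt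
      rw [SetLike.mem_coe, hS] at hi
      have hdiv : i.val / 3 < (n + 3 - 1) / 3 := by omega
      simpa using hdiv
    · have hlt := i.val_lt
      have hlt' := j.val_lt
      rw [SetLike.mem_coe, hS] at hi hj
      dsimp only at hij
      exact ZMod.val_injective n (by omega)
  · have hlt := i.val_lt
    have hsucc := zmod_val_add_one i
    rw [hS] at hi hi'
    split_ifs at hsucc <;> omega
  · have hlt := i.val_lt
    have hsucc := zmod_val_add_one i
    have hsucc' := zmod_val_add_one (i + 1)
    rw [hS, hS, hS]
    split_ifs at hsucc hsucc' <;> omega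

theorem IsPairedDominating.exists_adj {V : Type*} {G : SimpleGraph V} {D : Set V}
    (hD : IsPairedDominating G D) (v : V) : ∃ u ∈ D, G.Adj u v := by
  obtain ⟨hdom, M, rfl, hM⟩ := hD
  by_cases hv : v ∈ M.verts
  · obtain ⟨u, hu, -⟩ := hM hv
    exact ⟨u, hu.snd_mem, hu.adj_sub.symm⟩
  · exact hdom v hv

theorem exists_isPairedDominating_of_pairs {V ι : Type*} [Finite ι] {G : SimpleGraph V}
    {f g : ι → V} (hf : f.Injective) (hg : g.Injective) (hfg : ∀ a b, f a ≠ g b)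
    (hadj : ∀ a, G.Adj (f a) (g a)) (hdom : ∀ v, ∃ a, G.Adj (f a) v ∨ G.Adj (g a) v) :
    ∃ D, IsPairedDominating G D ∧ D.ncard = 2 * Nat.card ι := by
  have hdisj : Disjoint (Set.range f) (Set.range g) := by
    rw [Set.disjoint_left]
    rintro _ ⟨a, rfl⟩ ⟨b, hb⟩
    exact hfg a b hb.symm
  obtain ⟨M, hverts, hM⟩ := SimpleGraph.Subgraph.IsMatching.exists_of_disjoint_sets_of_equiv
    (G := G) hdisj ((Equiv.ofInjective f hf).symm.trans (Equiv.ofInjective g hg)) (by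
      rintro ⟨_, a, rfl⟩
      simpa using hadj a)
  refine ⟨Set.range f ∪ Set.range g, ⟨fun v _ ↦ ?_, M, hverts, hM⟩, ?_⟩
  · obtain ⟨a, ha | ha⟩ := hdom v
    · exact ⟨f a, .inl ⟨a, rfl⟩, ha⟩
    · exact ⟨g a, .inr ⟨a, rfl⟩, ha⟩
  · rw [Set.ncard_union_eq hdisj (Set.finite_range f) (Set.finite_range g),
      Set.ncard_range_of_injective hf, Set.ncard_range_of_injective hg, two_mul]

theorem flowerGraph_adj_inl_inl {n m : ℕ} {i j : ZMod n} :
    (flowerGraph n m).Adj (Sum.inl i) (Sum.inl j) ↔ i ≠ j ∧ (j = i + 1 ∨ i = j + 1) := by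
  simp [flowerGraph, flowerRel]

theorem flowerGraph_adj_inl_inr {n m : ℕ} {i j : ZMod n} {x : Fin (m - 2)} :
    (flowerGraph n m).Adj (Sum.inl i) (Sum.inr (j, x)) ↔
      (j = i ∧ x.val = 0) ∨ (i = j + 1 ∧ x.val = m - 3) := by
  simp [flowerGraph, flowerRel]

theorem flowerGraph_adj_inr_inr {n m : ℕ} {i j : ZMod n} {x y : Fin (m - 2)} :
    (flowerGraph n m).Adj (Sum.inr (i, x)) (Sum.inr (j, y)) ↔
      j = i ∧ (y.val = x.val + 1 ∨ x.val = y.val + 1) := by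
  simp only [flowerGraph, SimpleGraph.fromRel_adj, flowerRel, ne_eq, Sum.inr.injEq, Prod.mk.injEq,
    Fin.ext_iff, eq_comm (a := i)]
  grind

section LowerBound

variable {n m : ℕ} {M : (flowerGraph n m).Subgraph} {i : ZMod n}

open scoped Classical in
/-- The number (`0` or `1`) of vertices of `M` at the center `u_i`. -/
noncomputable def centerCount (M : (flowerGraph n m).Subgraph) (i : ZMod n) : ℕ :=
  if Sum.inl i ∈ M.verts then 1 else 0

open scoped Classical in
/-- The positions of the vertices of `M` in the `i`-th petal, the path of the `v_{i,j}`. -/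
noncomputable def petalVerts (M : (flowerGraph n m).Subgraph) (i : ZMod n) :
    Finset (Fin (m - 2)) :=
  {x | Sum.inr (i, x) ∈ M.verts}

open scoped Classical in
/-- The smaller positions of the edges of `M` inside the `i`-th petal. -/
noncomputable def pairFirsts (M : (flowerGraph n m).Subgraph) (i : ZMod n) :
    Finset (Fin (m - 2)) :=
  {x | ∃ y, y.val = x.val + 1 ∧ M.Adj (Sum.inr (i, x)) (Sum.inr (i, y))}

open scoped Classical in
/-- The larger positions of the edges of `M` inside the `i`-th petal. -/
noncomputable def pairSeconds (M : (flowerGraph n m).Subgraph) (i : ZMod n) :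
    Finset (Fin (m - 2)) :=
  {y | ∃ x, y.val = x.val + 1 ∧ M.Adj (Sum.inr (i, x)) (Sum.inr (i, y))}

theorem centerCount_le_one (M : (flowerGraph n m).Subgraph) (i : ZMod n) :
    centerCount M i ≤ 1 := by
  unfold centerCount
  split_ifs <;> omega

theorem mem_petalVerts {x : Fin (m - 2)} : x ∈ petalVerts M i ↔ Sum.inr (i, x) ∈ M.verts := by
  simp [petalVerts]

theorem mem_pairFirsts {x : Fin (m - 2)} :
    x ∈ pairFirsts M i ↔ ∃ y, y.val = x.val + 1 ∧ M.Adj (Sum.inr (i, x)) (Sum.inr (i, y)) := by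
  simp [pairFirsts]

theorem mem_pairSeconds {y : Fin (m - 2)} :
    y ∈ pairSeconds M i ↔ ∃ x, y.val = x.val + 1 ∧ M.Adj (Sum.inr (i, x)) (Sum.inr (i, y)) := by
  simp [pairSeconds]

theorem card_pairFirsts_le_card_pairSeconds : (pairFirsts M i).card ≤ (pairSeconds M i).card := by
  refine Finset.card_le_card_of_forall_subsingleton (fun x y ↦ y.val = x.val + 1) ?_ ?_
  · intro x hx
    obtain ⟨y, hxy, hadj⟩ := mem_pairFirsts.1 hx
    exact ⟨y, mem_pairSeconds.2 ⟨x, hxy, hadj⟩, hxy⟩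
  · rintro y - x ⟨-, hx⟩ x' ⟨-, hx'⟩
    exact Fin.ext (by omega)

theorem disjoint_pairFirsts_pairSeconds (hM : M.IsMatching) :
    Disjoint (pairFirsts M i) (pairSeconds M i) := by
  rw [Finset.disjoint_left]
  intro x hx hx'
  obtain ⟨y, hy, hxy⟩ := mem_pairFirsts.1 hx
  obtain ⟨z, hz, hzx⟩ := mem_pairSeconds.1 hx'
  obtain rfl : y = z := by simpa using hM.eq_of_adj_left hxy hzx.symm
  omega

theorem pairFirsts_union_pairSeconds_subset :
    pairFirsts M i ∪ pairSeconds M i ⊆ petalVerts M i := by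
  intro x hx
  rw [Finset.mem_union, mem_pairFirsts, mem_pairSeconds] at hx
  obtain ⟨_, _, hadj⟩ | ⟨_, _, hadj⟩ := hx
  · exact mem_petalVerts.2 hadj.fst_mem
  · exact mem_petalVerts.2 hadj.snd_mem

theorem two_mul_card_pairFirsts_le_card_union (hM : M.IsMatching) :
    2 * (pairFirsts M i).card ≤ (pairFirsts M i ∪ pairSeconds M i).card := by
  rw [Finset.card_union_of_disjoint (disjoint_pairFirsts_pairSeconds hM), two_mul]
  exact Nat.add_le_add_left card_pairFirsts_le_card_pairSeconds _

theorem two_mul_card_pairFirsts_le_card_petalVerts (hM : M.IsMatching) :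
    2 * (pairFirsts M i).card ≤ (petalVerts M i).card :=
  (two_mul_card_pairFirsts_le_card_union hM).trans
    (Finset.card_le_card pairFirsts_union_pairSeconds_subset)

theorem two_mul_card_pairFirsts_lt_card_petalVerts (hM : M.IsMatching) {j : ZMod n}
    {x : Fin (m - 2)} (hjx : M.Adj (Sum.inl j) (Sum.inr (i, x))) :
    2 * (pairFirsts M i).card < (petalVerts M i).card := by
  refine (two_mul_card_pairFirsts_le_card_union hM).trans_lt (Finset.card_lt_card ?_)
  refine Finset.ssubset_iff_subset_ne.2 ⟨pairFirsts_union_pairSeconds_subset, fun heq ↦ ?_⟩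
  have hx : x ∈ pairFirsts M i ∪ pairSeconds M i := heq ▸ mem_petalVerts.2 hjx.snd_mem
  rw [Finset.mem_union, mem_pairFirsts, mem_pairSeconds] at hx
  obtain ⟨_, _, hadj⟩ | ⟨_, _, hadj⟩ := hx
  · exact Sum.inl_ne_inr (hM.eq_of_adj_left hjx.symm hadj)
  · exact Sum.inl_ne_inr (hM.eq_of_adj_left hjx.symm hadj.symm)

theorem mem_pairFirsts_or_mem_pairSeconds_or_end (hM : M.IsMatching) {x : Fin (m - 2)}
    (hx : Sum.inr (i, x) ∈ M.verts) :
    x ∈ pairFirsts M i ∨ x ∈ pairSeconds M i ∨ (x.val = 0 ∧ Sum.inl i ∈ M.verts) ∨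
      (x.val = m - 3 ∧ Sum.inl (i + 1) ∈ M.verts) := by
  obtain ⟨j | ⟨j, y⟩, hw, -⟩ := hM hx
  · obtain ⟨rfl, hx0⟩ | ⟨rfl, hx0⟩ := flowerGraph_adj_inl_inr.1 hw.adj_sub.symm
    · exact .inr (.inr (.inl ⟨hx0, hw.snd_mem⟩))
    · exact .inr (.inr (.inr ⟨hx0, hw.snd_mem⟩))
  · obtain ⟨rfl, hxy | hxy⟩ := flowerGraph_adj_inr_inr.1 hw.adj_sub
    · exact .inl (mem_pairFirsts.2 ⟨y, hxy, hw⟩)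
    · exact .inr (.inl (mem_pairSeconds.2 ⟨y, hxy, hw.symm⟩))

theorem mem_Icc_pairFirsts_or_near_end (hM : M.IsMatching)
    (hdom : ∀ v, ∃ u ∈ M.verts, (flowerGraph n m).Adj u v) (x : Fin (m - 2)) :
    (∃ z ∈ pairFirsts M i, x.val ∈ Finset.Icc (z.val - 1) (z.val + 2)) ∨
      (Sum.inl i ∈ M.verts ∧ x.val < 2) ∨ (Sum.inl (i + 1) ∈ M.verts ∧ m - 4 ≤ x.val) := by
  simp only [Finset.mem_Icc]
  obtain ⟨j | ⟨j, y⟩, hu, hux⟩ := hdom (Sum.inr (i, x))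
  · obtain ⟨rfl, hx0⟩ | ⟨rfl, hx0⟩ := flowerGraph_adj_inl_inr.1 hux
    · exact .inr (.inl ⟨hu, by omega⟩)
    · exact .inr (.inr ⟨hu, by omega⟩)
  · obtain ⟨rfl, hxy⟩ := flowerGraph_adj_inr_inr.1 hux
    obtain hy | hy | ⟨hy, hi⟩ | ⟨hy, hi⟩ := mem_pairFirsts_or_mem_pairSeconds_or_end hM hu
    · exact .inl ⟨y, hy, by omega⟩
    · obtain ⟨z, hyz, hzy⟩ := mem_pairSeconds.1 hy
      exact .inl ⟨z, mem_pairFirsts.2 ⟨y, hyz, hzy⟩, by omega⟩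
    · exact .inr (.inl ⟨hi, by omega⟩)
    · exact .inr (.inr ⟨hi, by omega⟩)

theorem petal_length_le (hM : M.IsMatching)
    (hdom : ∀ v, ∃ u ∈ M.verts, (flowerGraph n m).Adj u v) :
    m - 2 ≤ 4 * (pairFirsts M i).card + 2 * (centerCount M i + centerCount M (i + 1)) := by
  classical
  let inner : Finset ℕ := (pairFirsts M i).biUnion fun z ↦ Finset.Icc (z.val - 1) (z.val + 2)
  let left : Finset ℕ := if Sum.inl i ∈ M.verts then Finset.range 2 else ∅
  let right : Finset ℕ := if Sum.inl (i + 1) ∈ M.verts then Finset.Ico (m - 4) (m - 2) else ∅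
  have hcover : Finset.range (m - 2) ⊆ inner ∪ left ∪ right := by
    intro x hx
    rw [Finset.mem_range] at hx
    rw [Finset.mem_union, Finset.mem_union, Finset.mem_biUnion]
    obtain hz | ⟨hi, hx'⟩ | ⟨hi, hx'⟩ := mem_Icc_pairFirsts_or_near_end hM hdom (i := i) ⟨x, hx⟩
    · exact .inl (.inl hz)
    · exact .inl (.inr (by simpa [left, hi] using hx'))
    · exact .inr (by simpa [right, hi, hx] using hx')
  have hinner : inner.card ≤ (pairFirsts M i).card * 4 :=
    Finset.card_biUnion_le_card_mul _ _ _ fun z _ ↦ by rw [Nat.card_Icc]; omega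
  have hleft : left.card ≤ 2 * centerCount M i := by
    simp only [left, centerCount]
    split_ifs <;> simp
  have hright : right.card ≤ 2 * centerCount M (i + 1) := by
    simp only [right, centerCount]
    split_ifs <;> simp only [Nat.card_Ico, Finset.card_empty] <;> omega
  have hcard := Finset.card_le_card hcover
  rw [Finset.card_range] at hcard
  have hunion := Finset.card_union_le (inner ∪ left) right
  have hunion' := Finset.card_union_le inner left
  omega

/-- The center `u_i` is matched to `u_{i+1}` or into the `i`-th petal. -/
def MatchedAhead (M : (flowerGraph n m).Subgraph) (i : ZMod n) : Prop :=
  M.Adj (Sum.inl i) (Sum.inl (i + 1)) ∨ ∃ x, M.Adj (Sum.inl i) (Sum.inr (i, x))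

open scoped Classical in
/-- The charge sent by the center `u_i` to the `i`-th petal. A center of `M` has three units of
charge, of which the petal on the side of its partner gets one and the other petal gets two. -/
noncomputable def chargeAhead (M : (flowerGraph n m).Subgraph) (i : ZMod n) : ℕ :=
  centerCount M i * if MatchedAhead M i then 1 else 2

open scoped Classical in
/-- The charge sent by the center `u_i` to the `(i-1)`-st petal, complementary to `chargeAhead`. -/
noncomputable def chargeBehind (M : (flowerGraph n m).Subgraph) (i : ZMod n) : ℕ :=
  centerCount M i * if MatchedAhead M i then 2 else 1

theorem chargeAhead_add_chargeBehind (M : (flowerGraph n m).Subgraph) (i : ZMod n) :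
    chargeAhead M i + chargeBehind M i = 3 * centerCount M i := by
  unfold chargeAhead chargeBehind
  split_ifs <;> ring

theorem adj_of_not_matchedAhead (hM : M.IsMatching) (hi : Sum.inl (i + 1) ∈ M.verts)
    (h : ¬MatchedAhead M (i + 1)) :
    M.Adj (Sum.inl i) (Sum.inl (i + 1)) ∨ ∃ x, M.Adj (Sum.inl (i + 1)) (Sum.inr (i, x)) := by
  obtain ⟨j | ⟨j, x⟩, hw, -⟩ := hM hi
  · obtain ⟨-, rfl | hij⟩ := flowerGraph_adj_inl_inl.1 hw.adj_sub
    · exact absurd (.inl hw) h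
    · obtain rfl := add_right_cancel hij
      exact .inl hw.symm
  · obtain ⟨rfl, -⟩ | ⟨hij, -⟩ := flowerGraph_adj_inl_inr.1 hw.adj_sub
    · exact absurd (.inr ⟨x, hw⟩) h
    · obtain rfl := add_right_cancel hij
      exact .inr ⟨x, hw⟩

theorem two_le_chargeAhead_add_chargeBehind (hM : M.IsMatching)
    (hcenter : Sum.inl i ∈ M.verts ∨ Sum.inl (i + 1) ∈ M.verts)
    (hinto : ∀ j x, ¬M.Adj (Sum.inl j) (Sum.inr (i, x))) :
    2 ≤ chargeAhead M i + chargeBehind M (i + 1) := by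
  simp only [chargeAhead, chargeBehind, centerCount]
  by_cases hadj : M.Adj (Sum.inl i) (Sum.inl (i + 1))
  · rw [if_pos hadj.fst_mem, if_pos hadj.snd_mem]
    split_ifs <;> omega
  have hahead : ¬MatchedAhead M i := fun h ↦ h.elim hadj fun ⟨x, hx⟩ ↦ hinto i x hx
  by_cases hi : Sum.inl i ∈ M.verts
  · simp [hi, hahead]
  have hi' := hcenter.resolve_left hi
  have hahead' : MatchedAhead M (i + 1) := by
    by_contra h
    exact (adj_of_not_matchedAhead hM hi' h).elim hadj fun ⟨x, hx⟩ ↦ hinto _ x hx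
  simp [hi', hahead']

theorem le_petal_charge {k : ℕ} {M : (flowerGraph n (4 * k + 3)).Subgraph} (hM : M.IsMatching)
    (hdom : ∀ v, ∃ u ∈ M.verts, (flowerGraph n (4 * k + 3)).Adj u v) (i : ZMod n) :
    6 * k + 2 ≤ 3 * (petalVerts M i).card + chargeAhead M i + chargeBehind M (i + 1) := by
  have hlen := petal_length_le hM hdom (i := i)
  have hpairs := two_mul_card_pairFirsts_le_card_petalVerts hM (i := i)
  have hi := centerCount_le_one M i
  have hi' := centerCount_le_one M (i + 1)
  by_cases hinto : ∃ j x, M.Adj (Sum.inl j) (Sum.inr (i, x))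
  · obtain ⟨j, x, hjx⟩ := hinto
    have hlt := two_mul_card_pairFirsts_lt_card_petalVerts hM hjx
    omega
  by_cases hcenter : Sum.inl i ∈ M.verts ∨ Sum.inl (i + 1) ∈ M.verts
  · have hcharge := two_le_chargeAhead_add_chargeBehind hM hcenter (by simpa using hinto)
    omega
  · rw [not_or] at hcenter
    simp only [centerCount, hcenter, if_false] at hlen
    omega

theorem ncard_verts_eq_sum [NeZero n] (M : (flowerGraph n m).Subgraph) :
    M.verts.ncard = ∑ i, (centerCount M i + (petalVerts M i).card) := by
  classical
  rw [Set.ncard_eq_toFinset_card', ← Set.filter_mem_univ_eq_toFinset, Finset.card_filter,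
    Fintype.sum_sum_type, Fintype.sum_prod_type, Finset.sum_add_distrib]
  simp only [centerCount, petalVerts, Finset.card_filter]

theorem three_mul_ncard_verts_eq_sum [NeZero n] (M : (flowerGraph n m).Subgraph) :
    3 * M.verts.ncard =
      ∑ i, (3 * (petalVerts M i).card + chargeAhead M i + chargeBehind M (i + 1)) := by
  have hshift : ∑ i, chargeBehind M (i + 1) = ∑ i, chargeBehind M i :=
    Equiv.sum_comp (Equiv.addRight (1 : ZMod n)) (chargeBehind M)
  rw [ncard_verts_eq_sum, Finset.mul_sum, Finset.sum_add_distrib, hshift, ← Finset.sum_add_distrib]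
  refine Finset.sum_congr rfl fun i _ ↦ ?_
  rw [add_assoc, chargeAhead_add_chargeBehind]
  ring

theorem le_ncard_of_isPairedDominating_flowerGraph [NeZero n] {k : ℕ}
    {D : Set (FlowerVert n (4 * k + 3))} (hD : IsPairedDominating (flowerGraph n (4 * k + 3)) D) :
    2 * (n * k + n ⌈/⌉ 3) ≤ D.ncard := by
  classical
  have hdom := hD.exists_adj
  obtain ⟨-, M, rfl, hM⟩ := hD
  have heven : Even M.verts.ncard := by
    rw [Set.ncard_eq_toFinset_card']
    exact hM.even_card
  have hsum : n * (6 * k + 2) ≤ 3 * M.verts.ncard := by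
    rw [three_mul_ncard_verts_eq_sum]
    simpa using Finset.sum_le_sum fun (i : ZMod n) (_ : i ∈ Finset.univ) ↦ le_petal_charge hM hdom i
  obtain ⟨p, hp⟩ := heven
  have hexpand : n * (6 * k + 2) = 6 * (n * k) + 2 * n := by ring
  rw [Nat.ceilDiv_eq_add_pred_div]
  omega

end LowerBound

section UpperBound

variable {n k : ℕ} {S : Finset (ZMod n)}

open scoped Classical in
/-- The position of the first pair in the `i`-th petal, given that the centers are paired as
`{u_i, u_{i+1}}` for `i ∈ S`: it is `2` if `u_i` is among the paired centers (so that `v_{i,1}` is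
already dominated) and `1` otherwise. Positions start at `0`. -/
noncomputable def petalStart (S : Finset (ZMod n)) (i : ZMod n) : ℕ :=
  if i ∈ S ∨ i - 1 ∈ S then 2 else 1

theorem petalStart_le_two (S : Finset (ZMod n)) (i : ZMod n) : petalStart S i ≤ 2 := by
  unfold petalStart
  split_ifs <;> omega

/-- The first vertices of the pairs of the paired dominating set built from `S`: the pairs
`{u_i, u_{i+1}}` for `i ∈ S`, and in each petal the pairs of consecutive vertices starting at
every fourth position from `petalStart S i` on. -/
noncomputable def pairFst (S : Finset (ZMod n)) (k : ℕ) :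
    S ⊕ ZMod n × Fin k → FlowerVert n (4 * k + 3)
  | Sum.inl i => Sum.inl i
  | Sum.inr (i, t) => Sum.inr (i, ⟨4 * t + petalStart S i, by
      have := petalStart_le_two S i
      omega⟩)

/-- The partners of the vertices given by `pairFst`. -/
noncomputable def pairSnd (S : Finset (ZMod n)) (k : ℕ) :
    S ⊕ ZMod n × Fin k → FlowerVert n (4 * k + 3)
  | Sum.inl i => Sum.inl (i + 1)
  | Sum.inr (i, t) => Sum.inr (i, ⟨4 * t + petalStart S i + 1, by
      have := petalStart_le_two S i
      omega⟩)

theorem pairFst_injective : (pairFst S k).Injective := by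
  rintro (i | ⟨i, s⟩) (j | ⟨j, t⟩) h <;>
    simp only [pairFst, Sum.inl.injEq, Sum.inr.injEq, Prod.mk.injEq, Fin.mk.injEq, reduceCtorEq]
      at h
  · rw [Subtype.ext h]
  · obtain ⟨rfl, hst⟩ := h
    rw [Fin.ext (show s.val = t.val by omega)]

theorem pairSnd_injective : (pairSnd S k).Injective := by
  rintro (i | ⟨i, s⟩) (j | ⟨j, t⟩) h <;>
    simp only [pairSnd, Sum.inl.injEq, Sum.inr.injEq, Prod.mk.injEq, Fin.mk.injEq, reduceCtorEq]
      at h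
  · rw [Subtype.ext (add_right_cancel h)]
  · obtain ⟨rfl, hst⟩ := h
    rw [Fin.ext (show s.val = t.val by omega)]

theorem pairFst_ne_pairSnd (hS : ∀ i ∈ S, i + 1 ∉ S) (a b : S ⊕ ZMod n × Fin k) :
    pairFst S k a ≠ pairSnd S k b := by
  intro h
  obtain i | ⟨i, s⟩ := a <;> obtain j | ⟨j, t⟩ := b <;>
    simp only [pairFst, pairSnd, Sum.inl.injEq, Sum.inr.injEq, Prod.mk.injEq, Fin.mk.injEq,
      reduceCtorEq] at h
  · exact hS j j.2 (h ▸ i.2)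
  · obtain ⟨rfl, hst⟩ := h
    omega

theorem flowerGraph_adj_pairFst_pairSnd (hn : 1 < n) (a : S ⊕ ZMod n × Fin k) :
    (flowerGraph n (4 * k + 3)).Adj (pairFst S k a) (pairSnd S k a) := by
  have : Fact (1 < n) := ⟨hn⟩
  obtain i | ⟨i, t⟩ := a
  · exact flowerGraph_adj_inl_inl.2 ⟨by simp, .inl rfl⟩
  · exact flowerGraph_adj_inr_inr.2 ⟨rfl, .inl rfl⟩

theorem exists_pair_adj_of_paired_center {i : ZMod n} (hi : i ∈ S ∨ i - 1 ∈ S)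
    {v : FlowerVert n (4 * k + 3)} (hv : (flowerGraph n (4 * k + 3)).Adj (Sum.inl i) v) :
    ∃ a, (flowerGraph n (4 * k + 3)).Adj (pairFst S k a) v ∨
      (flowerGraph n (4 * k + 3)).Adj (pairSnd S k a) v := by
  obtain hi | hi := hi
  · exact ⟨.inl ⟨i, hi⟩, .inl hv⟩
  · exact ⟨.inl ⟨i - 1, hi⟩, .inr (by simpa [pairSnd] using hv)⟩

theorem exists_pair_adj_center (hn : 1 < n) (hS : ∀ i, i ∈ S ∨ i + 1 ∈ S ∨ i + 1 + 1 ∈ S)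
    (i : ZMod n) :
    ∃ a, (flowerGraph n (4 * k + 3)).Adj (pairFst S k a) (Sum.inl i) ∨
      (flowerGraph n (4 * k + 3)).Adj (pairSnd S k a) (Sum.inl i) := by
  have : Fact (1 < n) := ⟨hn⟩
  have hpred : (flowerGraph n (4 * k + 3)).Adj (Sum.inl (i - 1)) (Sum.inl i) :=
    flowerGraph_adj_inl_inl.2 ⟨by simp, .inl (by simp)⟩
  have hsucc : (flowerGraph n (4 * k + 3)).Adj (Sum.inl (i + 1)) (Sum.inl i) :=
    flowerGraph_adj_inl_inl.2 ⟨by simp, .inr rfl⟩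
  obtain h | h | h := hS (i - 1)
  · exact exists_pair_adj_of_paired_center (.inl h) hpred
  · exact exists_pair_adj_of_paired_center (.inr (by simpa using h)) hsucc
  · exact exists_pair_adj_of_paired_center (.inl (by simpa using h)) hsucc

theorem exists_pair_adj_petal_inner {i : ZMod n} {x : Fin (4 * k + 3 - 2)}
    (hx : petalStart S i ≤ x.val + 1) (hx' : x.val + 1 < 4 * k + petalStart S i) :
    ∃ a, (flowerGraph n (4 * k + 3)).Adj (pairFst S k a) (Sum.inr (i, x)) ∨
      (flowerGraph n (4 * k + 3)).Adj (pairSnd S k a) (Sum.inr (i, x)) := by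
  refine ⟨.inr (i, ⟨(x.val + 1 - petalStart S i) / 4, by omega⟩), ?_⟩
  simp only [pairFst, pairSnd, flowerGraph_adj_inr_inr, true_and]
  omega

theorem exists_pair_adj_petal (hS : ∀ i, i ∈ S ∨ i + 1 ∈ S ∨ i + 1 + 1 ∈ S) (i : ZMod n)
    (x : Fin (4 * k + 3 - 2)) :
    ∃ a, (flowerGraph n (4 * k + 3)).Adj (pairFst S k a) (Sum.inr (i, x)) ∨
      (flowerGraph n (4 * k + 3)).Adj (pairSnd S k a) (Sum.inr (i, x)) := by
  have hlt := x.isLt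
  by_cases hi : i ∈ S ∨ i - 1 ∈ S
  · have hstart : petalStart S i = 2 := if_pos hi
    by_cases hx : x.val = 0
    · exact exists_pair_adj_of_paired_center hi (flowerGraph_adj_inl_inr.2 (.inl ⟨rfl, hx⟩))
    · exact exists_pair_adj_petal_inner (by omega) (by omega)
  · have hstart : petalStart S i = 1 := if_neg hi
    have hi' : i + 1 ∈ S ∨ i + 1 - 1 ∈ S := by
      have := hS (i - 1)
      simp only [sub_add_cancel] at this
      tauto
    by_cases hx : x.val = 4 * k
    · exact exists_pair_adj_of_paired_center hi' (flowerGraph_adj_inl_inr.2 (.inr ⟨rfl, hx⟩))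
    · exact exists_pair_adj_petal_inner (by omega) (by omega)

theorem exists_isPairedDominating_flowerGraph (hn : 1 < n) (k : ℕ) :
    ∃ D, IsPairedDominating (flowerGraph n (4 * k + 3)) D ∧
      D.ncard ≤ 2 * (n * k + n ⌈/⌉ 3) := by
  have : NeZero n := ⟨by omega⟩
  obtain ⟨S, hcard, hspaced, hdense⟩ := exists_spaced_finset_zmod hn
  obtain ⟨D, hD, hDcard⟩ := exists_isPairedDominating_of_pairs
    (G := flowerGraph n (4 * k + 3)) pairFst_injective pairSnd_injective
    (pairFst_ne_pairSnd hspaced) (flowerGraph_adj_pairFst_pairSnd hn) (by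
      rintro (i | ⟨i, x⟩)
      · exact exists_pair_adj_center hn hdense i
      · exact exists_pair_adj_petal hdense i x)
  refine ⟨D, hD, ?_⟩
  rw [hDcard]
  simp only [Nat.card_eq_fintype_card, Fintype.card_sum, Fintype.card_coe, Fintype.card_prod,
    ZMod.card, Fintype.card_fin]
  omega

end UpperBound

theorem pairedDomNum_flowerGraph {n : ℕ} (hn : 1 < n) (k : ℕ) :
    pairedDomNum (flowerGraph n (4 * k + 3)) = 2 * (n * k + n ⌈/⌉ 3) := by
  have : NeZero n := ⟨by omega⟩
  obtain ⟨D, hD, hcard⟩ := exists_isPairedDominating_flowerGraph hn k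
  refine IsLeast.csInf_eq
    ⟨⟨D, hD, hcard.antisymm (le_ncard_of_isPairedDominating_flowerGraph hD)⟩, ?_⟩
  rintro _ ⟨D', hD', rfl⟩
  exact le_ncard_of_isPairedDominating_flowerGraph hD'

theorem flower_pairedDomNum_mod4_3 (n m : ℕ) (hn : 3 ≤ n) (hm : 3 ≤ m) (h : m % 4 = 3) :
    (pairedDomNum (flowerGraph n m) : ℤ) = 2 * ⌈(3 * (n : ℚ) * m - 5 * n) / 12⌉ := by
  obtain ⟨k, rfl⟩ : ∃ k, m = 4 * k + 3 := ⟨m / 4, by omega⟩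
  have hsplit : (3 * (n : ℚ) * (4 * k + 3 : ℕ) - 5 * n) / 12 = (n * k : ℕ) + (n : ℚ) / (3 : ℕ) := by
    push_cast
    ring
  rw [pairedDomNum_flowerGraph (show 1 < n by omega), hsplit, Int.ceil_natCast_add,
    ceil_natCast_div_natCast]
  norm_cast
end

section
/- If m ≡ 1 or 2 (mod 6) and m, n ≥ 3, then γ_p^2(f_{n×m}) = 2·⌈(nm - n)/6⌉. -/
/-!
Let `m = (2 * r + 2) * k + 1` or `m = (2 * r + 2) * k + 2`, and count every edge of a perfect
matching of the dominating set `D` in the unique petal cycle containing it. A matched edge dominates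
`2 * r + 2` consecutive positions, and members of `D` outside the petal only help near its two ends,
so every petal contains at least `k` matched edges. In the second case a petal with exactly `k` of
them has little slack: the farther its two hub vertices are from `D`, the farther its matched edges
are from its ends. Along a run of such petals this pushes `D` away from the hub, one step per petal
on either side, so that the middle of a run of `2 * r + 2` would not be dominated. Hence at least
`⌈n / (2 * r + 2)⌉` petals contain an additional edge. Evenly spaced pairs on the petals and, in the
second case, on the hub attain both bounds.
-/

open SimpleGraph Finset

theorem natCeil_natCast_div_natCast {K : Type*} [Field K] [LinearOrder K] [IsStrictOrderedRing K]
    [FloorSemiring K] (a : ℕ) {b : ℕ} (hb : 0 < b) : ⌈(a / b : K)⌉₊ = a ⌈/⌉ b :=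
  eq_of_forall_ge_iff fun c ↦ by
    rw [ceilDiv_le_iff_le_mul hb, Nat.ceil_le, div_le_iff₀' (by exact_mod_cast hb)]
    exact_mod_cast Iff.rfl

theorem mul_add_ceilDiv {w : ℕ} (hw : 0 < w) (a b : ℕ) : (w * a + b) ⌈/⌉ w = a + b ⌈/⌉ w := by
  rw [Nat.ceilDiv_eq_add_pred_div, Nat.ceilDiv_eq_add_pred_div, add_assoc, Nat.add_sub_assoc
    (by omega), Nat.mul_add_div hw]

theorem card_le_mul_card_of_forall_exists_add_mem {A : Type*} [AddGroup A] [Fintype A]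
    {X S : Finset A} (h : ∀ a, ∃ s ∈ S, a + s ∈ X) : Fintype.card A ≤ #X * #S := by
  classical
  refine (card_le_card fun a _ ↦ ?_).trans (card_sub_le (s := X) (t := S))
  obtain ⟨s, hs, has⟩ := h a
  exact mem_sub.2 ⟨a + s, has, s, hs, add_sub_cancel_right a s⟩

theorem injective_add_toNat {ι : Type*} [LinearOrder ι] {g : ι → ℕ}
    (hg : ∀ s t, s < t → g s + 2 ≤ g t) :
    Function.Injective fun x : ι × Bool ↦ g x.1 + x.2.toNat := by
  rintro ⟨s, b⟩ ⟨t, b'⟩ h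
  have hb := b.toNat_le
  have hb' := b'.toNat_le
  dsimp only at h
  obtain hst | rfl | hts := lt_trichotomy s t
  · have := hg s t hst
    omega
  · exact Prod.ext rfl (by revert h; cases b <;> cases b' <;> simp)
  · have := hg t s hts
    omega

section CoverByIntervals

variable {T : Finset ℕ} {r a b s : ℕ}

theorem succ_le_add_mul_card_of_cover
    (hT : ∀ p, a ≤ p → p ≤ b → ∃ s ∈ T, p ≤ s + 1 + r ∧ s ≤ p + r) :
    b + 1 ≤ a + (2 * r + 2) * #T := by
  have hsub : Icc a b ⊆ T.biUnion fun s ↦ Icc (s - r) (s + 1 + r) := fun p hp ↦ by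
    obtain ⟨ha, hb⟩ := mem_Icc.1 hp
    obtain ⟨s, hs, hps, hsp⟩ := hT p ha hb
    exact mem_biUnion.2 ⟨s, hs, mem_Icc.2 ⟨by omega, hps⟩⟩
  have hcard := (card_le_card hsub).trans <| card_biUnion_le_card_mul _ _ (2 * r + 2)
    fun s _ ↦ by rw [Nat.card_Icc]; omega
  rw [Nat.card_Icc, mul_comm] at hcard
  omega

-- In both bounds the other members of `T` still cover the part of `[a, b]` that `s` misses.
theorem le_max_add_mul_card_of_cover
    (hT : ∀ p, a ≤ p → p ≤ b → ∃ s ∈ T, p ≤ s + 1 + r ∧ s ≤ p + r) (hs : s ∈ T) :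
    b + 2 * r + 3 ≤ max a (s + r + 2) + (2 * r + 2) * #T := by
  have hcover : b + 1 ≤ max a (s + r + 2) + (2 * r + 2) * #(T.erase s) :=
    succ_le_add_mul_card_of_cover fun p hp hpb ↦ by
      obtain ⟨s', hs', hps', hsp'⟩ := hT p (by omega) hpb
      exact ⟨s', mem_erase.2 ⟨by rintro rfl; omega, hs'⟩, hps', hsp'⟩
  rw [← card_erase_add_one hs, mul_add]
  omega

theorem min_add_le_add_mul_card_of_cover
    (hT : ∀ p, a ≤ p → p ≤ b → ∃ s ∈ T, p ≤ s + 1 + r ∧ s ≤ p + r) (hs : s ∈ T) :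
    min (b + r + 1) s + r + 2 ≤ a + (2 * r + 2) * #T := by
  rw [← card_erase_add_one hs, mul_add]
  rcases le_or_gt s r with hsr | hrs
  · omega
  · have hcover : min b (s - r - 1) + 1 ≤ a + (2 * r + 2) * #(T.erase s) :=
      succ_le_add_mul_card_of_cover fun p hp hpb ↦ by
        obtain ⟨s', hs', hps', hsp'⟩ := hT p hp (by omega)
        exact ⟨s', mem_erase.2 ⟨by rintro rfl; omega, hs'⟩, hps', hsp'⟩
    omega

end CoverByIntervals

section Graph

variable {V : Type*} {G : SimpleGraph V}

theorem eq_or_exists_adj_of_edist_le {u v : V} {d : ℕ} (h : G.edist u v ≤ d) :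
    u = v ∨ ∃ e < d, ∃ w, G.Adj u w ∧ G.edist w v ≤ e := by
  obtain ⟨p, hp⟩ := exists_walk_of_edist_ne_top (ne_top_of_le_ne_top (ENat.natCast_ne_top d) h)
  cases p with
  | nil => exact .inl rfl
  | cons hadj q =>
    rw [← hp, Walk.length_cons] at h
    exact .inr ⟨q.length, by exact_mod_cast h, _, hadj, q.edist_le⟩

theorem edist_le_of_forall_adj_succ {f : ℕ → V} {N a b d : ℕ}
    (hf : ∀ p, p + 1 < N → G.Adj (f p) (f (p + 1))) (ha : a < N) (hb : b < N)
    (had : a ≤ b + d) (hbd : b ≤ a + d) : G.edist (f a) (f b) ≤ d := by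
  wlog hab : a ≤ b generalizing a b
  · rw [edist_comm]
    exact this hb ha hbd had (by omega)
  obtain ⟨e, rfl⟩ := Nat.exists_eq_add_of_le hab
  suffices h : ∀ e, a + e < N → G.edist (f a) (f (a + e)) ≤ e from
    (h e hb).trans (by exact_mod_cast (by omega : e ≤ d))
  intro e he
  induction e with
  | zero => simp
  | succ e ih =>
    refine G.edist_triangle (v := f (a + e)) |>.trans ?_
    rw [Nat.cast_succ]
    exact add_le_add (ih (by omega)) (edist_eq_one_iff_adj.2 (hf _ he)).le

theorem exists_edist_add_toNat_le_of_forall_adj_succ {f : ℕ → V} {N a p d : ℕ}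
    (hf : ∀ p, p + 1 < N → G.Adj (f p) (f (p + 1))) (ha : a + 1 < N) (hp : p < N)
    (had : a ≤ p + d) (hpd : p ≤ a + 1 + d) :
    ∃ b : Bool, G.edist (f (a + b.toNat)) (f p) ≤ d := by
  rcases le_or_gt p a with hpa | hap
  · exact ⟨false, by simpa using edist_le_of_forall_adj_succ hf (by omega) hp had (by omega)⟩
  · exact ⟨true, by simpa using edist_le_of_forall_adj_succ hf ha hp (by omega) hpd⟩

theorem ncard_verts_eq_two_mul_ncard_edgeSet [Finite V] {M : G.Subgraph} (hM : M.IsMatching) :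
    M.verts.ncard = 2 * M.edgeSet.ncard := by
  classical
  have := Fintype.ofFinite V
  rw [← M.image_coe_edgeSet_coe, Set.ncard_image_of_injective _
    (Sym2.map.injective Subtype.val_injective), ← coe_edgeFinset, Set.ncard_coe_finset,
    ← M.coe.sum_degrees_eq_twice_card_edges]
  have hdeg (v : M.verts) [Fintype (M.coe.neighborSet v)] : M.coe.degree v = 1 := by
    rw [degree_eq_one_iff_existsUnique_adj]
    obtain ⟨w, hvw, huniq⟩ := hM v.2
    exact ⟨⟨w, hvw.snd_mem⟩, hvw, fun y hy ↦ Subtype.ext (huniq y hy)⟩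
  simp only [hdeg, sum_const, smul_eq_mul, mul_one, card_univ, ← Nat.card_eq_fintype_card,
    Nat.card_coe_set_eq]

theorem exists_isKDistPairedDominating {ι : Type*} [Fintype ι] {k : ℕ} {f : ι × Bool → V}
    (hf : f.Injective) (hadj : ∀ s, G.Adj (f (s, false)) (f (s, true)))
    (hdom : ∀ v, ∃ x, G.edist (f x) v ≤ k) :
    ∃ D : Set V, IsKDistPairedDominating G k D ∧ D.ncard = 2 * Fintype.card ι := by
  have hside (b : Bool) : Function.Injective fun s ↦ f (s, b) :=
    fun s t h ↦ (Prod.ext_iff.1 (hf h)).1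
  have hdisj : Disjoint (Set.range fun s ↦ f (s, false)) (Set.range fun s ↦ f (s, true)) := by
    rw [Set.disjoint_left]
    rintro _ ⟨s, rfl⟩ ⟨t, h⟩
    simpa using hf h
  have hrange : (Set.range fun s ↦ f (s, false)) ∪ (Set.range fun s ↦ f (s, true)) =
      Set.range f := by
    ext v; simp [Prod.exists, Bool.exists_bool, exists_or]
  obtain ⟨M, hMverts, hM⟩ := Subgraph.IsMatching.exists_of_disjoint_sets_of_equiv hdisj
    ((Equiv.ofInjective _ (hside false)).symm.trans (Equiv.ofInjective _ (hside true)))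
    (by rintro ⟨_, s, rfl⟩; simpa using hadj s)
  refine ⟨Set.range f, ⟨fun v _ ↦ ?_, M, hMverts.trans hrange, hM⟩, ?_⟩
  · obtain ⟨x, hx⟩ := hdom v
    exact ⟨f x, Set.mem_range_self x, hx⟩
  · rw [← Set.image_univ, Set.ncard_image_of_injective _ hf, Set.ncard_univ]
    simp [mul_comm]

end Graph

section CycleVert

variable {n m : ℕ}

/-- The `p`-th vertex of the `i`-th petal cycle `u_i, v_{i,1}, …, v_{i,m-2}, u_{i+1}, u_i` of the
flower graph, for `p ≤ m`. Both `p = 0` and `p = m` give `u_i`, so that all edges of the flower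
graph, those between hub vertices included, join consecutive values. -/
def cycleVert (i : ZMod n) (p : ℕ) : FlowerVert n m :=
  if h : 0 < p ∧ p < m - 1 then .inr (i, ⟨p - 1, by omega⟩)
  else if p = m - 1 then .inl (i + 1) else .inl i

theorem inr_eq_cycleVert (i : ZMod n) (j : Fin (m - 2)) :
    (.inr (i, j) : FlowerVert n m) = cycleVert i (j + 1) := by
  simp [cycleVert, show (j : ℕ) + 1 < m - 1 by omega]

theorem cycleVert_zero (hm : 3 ≤ m) (i : ZMod n) :
    cycleVert i 0 = (.inl i : FlowerVert n m) := by
  simp [cycleVert, show 0 ≠ m - 1 by omega]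

theorem cycleVert_sub_one (i : ZMod n) :
    cycleVert i (m - 1) = (.inl (i + 1) : FlowerVert n m) := by
  simp [cycleVert]

theorem cycleVert_self (hm : 3 ≤ m) (i : ZMod n) :
    cycleVert i m = (.inl i : FlowerVert n m) := by
  simp [cycleVert, show m ≠ m - 1 by omega, show ¬m < m - 1 by omega]

theorem cycleVert_eq_cycleVert_iff {i j : ZMod n} {p q : ℕ} (hp : 0 < p ∧ p < m - 1) :
    (cycleVert i p : FlowerVert n m) = cycleVert j q ↔ i = j ∧ p = q := by
  grind [cycleVert]

theorem cycleVert_eq_inl_iff {i j : ZMod n} {p : ℕ} :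
    (cycleVert i p : FlowerVert n m) = .inl j ↔
      (p = m - 1 ∧ i + 1 = j) ∨ (p = 0 ∨ m ≤ p) ∧ p ≠ m - 1 ∧ i = j := by
  grind [cycleVert]

theorem exists_eq_cycleVert_of_adj (hm : 3 ≤ m) {x y : FlowerVert n m}
    (h : (flowerGraph n m).Adj x y) :
    ∃ i, ∃ p < m, s(x, y) = s(cycleVert i p, cycleVert i (p + 1)) := by
  wlog hrel : flowerRel n m x y generalizing x y
  · rw [Sym2.eq_swap]
    exact this h.symm (((fromRel_adj _ _ _).1 h).2.resolve_left hrel)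
  rcases x with i | ⟨i, j⟩ <;> rcases y with i' | ⟨i', j'⟩
  · refine ⟨i, m - 1, by omega, ?_⟩
    rw [cycleVert_sub_one, Nat.sub_add_cancel (by omega), cycleVert_self hm, Sym2.eq_swap, hrel]
  · rw [inr_eq_cycleVert]
    obtain ⟨rfl, hj⟩ | ⟨rfl, hj⟩ := hrel
    · exact ⟨i', 0, by omega, by rw [cycleVert_zero hm, hj]⟩
    · refine ⟨i', m - 2, by omega, ?_⟩
      rw [← cycleVert_sub_one, Sym2.eq_swap, hj]
      congr 3 <;> omega
  · exact hrel.elim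
  · obtain ⟨rfl, hj⟩ := hrel
    exact ⟨i', j + 1, by omega, by rw [inr_eq_cycleVert, inr_eq_cycleVert, hj]⟩

theorem adj_inl_inl_add_one (hn : 2 ≤ n) (i : ZMod n) :
    (flowerGraph n m).Adj (.inl i) (.inl (i + 1)) := by
  have : Fact (1 < n) := ⟨hn⟩
  exact (fromRel_adj _ _ _).2 ⟨by simp, .inl rfl⟩

theorem adj_cycleVert_succ (i : ZMod n) {p : ℕ} (hp : p + 1 < m) (hm : 3 ≤ m) :
    (flowerGraph n m).Adj (cycleVert i p) (cycleVert i (p + 1)) := by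
  refine (fromRel_adj _ _ _).2 ⟨?_, ?_⟩
  · grind [cycleVert]
  · grind [cycleVert, flowerRel]

theorem eq_cycleVert_of_adj_cycleVert (hm : 3 ≤ m) {i : ZMod n} {p : ℕ} {y : FlowerVert n m}
    (hp : 0 < p ∧ p < m - 1) (h : (flowerGraph n m).Adj (cycleVert i p) y) :
    y = cycleVert i (p - 1) ∨ y = cycleVert i (p + 1) := by
  obtain ⟨j, q, -, hq⟩ := exists_eq_cycleVert_of_adj hm h
  obtain ⟨hx, rfl⟩ | ⟨hx, rfl⟩ := Sym2.eq_iff.1 hq <;>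
    obtain ⟨rfl, rfl⟩ := (cycleVert_eq_cycleVert_iff hp).1 hx
  exacts [.inr rfl, .inl rfl]

theorem eq_of_adj_inl (hm : 3 ≤ m) {i : ZMod n} {y : FlowerVert n m}
    (h : (flowerGraph n m).Adj (.inl i) y) :
    y = .inl (i + 1) ∨ y = .inl (i - 1) ∨ y = cycleVert i 1 ∨ y = cycleVert (i - 1) (m - 2) := by
  obtain ⟨j, q, hq, hxy⟩ := exists_eq_cycleVert_of_adj hm h
  obtain ⟨hx, rfl⟩ | ⟨hx, rfl⟩ := Sym2.eq_iff.1 hxy <;>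
    obtain ⟨hpos, rfl⟩ | ⟨hpos, hne, rfl⟩ := cycleVert_eq_inl_iff.1 hx.symm
  · rw [hpos, Nat.sub_add_cancel (by omega), cycleVert_self hm]
    simp
  · obtain rfl : q = 0 := by omega
    simp
  · obtain rfl : q = m - 2 := by omega
    simp
  · obtain rfl : q = m - 1 := by omega
    rw [cycleVert_sub_one]
    simp

theorem injOn_edge_cycleVert (hn : 3 ≤ n) (hm : 3 ≤ m) :
    Set.InjOn (fun e : (_ : ZMod n) × ℕ ↦
      (s(cycleVert e.1 e.2, cycleVert e.1 (e.2 + 1)) : Sym2 (FlowerVert n m)))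
      {e | e.2 < m} := by
  have hne_add_one (x : ZMod n) : x ≠ x + 1 := by
    have : Fact (1 < n) := ⟨by omega⟩
    simp
  have hne_add_two (x : ZMod n) : x ≠ x + 1 + 1 := fun h ↦ by
    have h2 : ((2 : ℕ) : ZMod n) = 0 := by linear_combination -h
    have := Nat.le_of_dvd two_pos ((ZMod.natCast_eq_zero_iff 2 n).1 h2)
    omega
  rintro ⟨i, p⟩ hp ⟨j, q⟩ hq h
  simp only [Sym2.eq_iff, Set.mem_ofPred_eq] at h hp hq
  have : i = j ∧ p = q := by grind [cycleVert]
  grind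

end CycleVert

section Distance

variable {n m d : ℕ} {i : ZMod n} {x : FlowerVert n m}

theorem eq_cycleVert_or_edist_inl_le_of_edist_cycleVert_le (hm : 3 ≤ m) {p : ℕ} (hp : p < m)
    (h : (flowerGraph n m).edist (cycleVert i p) x ≤ d) :
    (∃ q, (0 < q ∧ q < m - 1) ∧ x = cycleVert i q ∧ p ≤ q + d ∧ q ≤ p + d) ∨
      ∃ e : ℕ, (flowerGraph n m).edist (.inl i) x ≤ e ∧ p + e ≤ d ∨
        (flowerGraph n m).edist (.inl (i + 1)) x ≤ e ∧ m - 1 + e ≤ p + d := by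
  induction d using Nat.strong_induction_on generalizing p with
  | _ d ih =>
    rcases Nat.eq_zero_or_pos p with rfl | hp0
    · exact .inr ⟨d, .inl ⟨by rwa [cycleVert_zero hm] at h, by simp⟩⟩
    rcases eq_or_ne p (m - 1) with rfl | hpm
    · exact .inr ⟨d, .inr ⟨by rwa [cycleVert_sub_one] at h, by simp⟩⟩
    obtain rfl | ⟨d', hd, w, hw, hwx⟩ := eq_or_exists_adj_of_edist_le h
    · exact .inl ⟨p, by omega, rfl, by omega⟩
    obtain ⟨p', hp', rfl⟩ : ∃ p', (p = p' + 1 ∨ p' = p + 1) ∧ w = cycleVert i p' := by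
      obtain rfl | rfl := eq_cycleVert_of_adj_cycleVert hm (by omega) hw
      exacts [⟨p - 1, by omega, rfl⟩, ⟨p + 1, by omega, rfl⟩]
    obtain ⟨q, hq, hxq, hpq⟩ | ⟨e, ⟨he, hpe⟩ | ⟨he, hpe⟩⟩ := ih d' hd (by omega) hwx
    · exact .inl ⟨q, hq, hxq, by omega⟩
    · exact .inr ⟨e, .inl ⟨he, by omega⟩⟩
    · exact .inr ⟨e, .inr ⟨he, by omega⟩⟩

theorem eq_or_edist_inl_le_or_eq_cycleVert_of_edist_inl_le (hm : 3 ≤ m)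
    (h : (flowerGraph n m).edist (.inl i) x ≤ d) :
    x = .inl i ∨
      (∃ j, (j = i - 1 ∨ j = i ∨ j = i + 1) ∧ ∃ e < d, (flowerGraph n m).edist (.inl j) x ≤ e) ∨
      ∃ q, (0 < q ∧ q < m - 1) ∧
        (x = cycleVert i q ∧ q ≤ d ∨ x = cycleVert (i - 1) q ∧ m - 1 ≤ q + d) := by
  obtain rfl | ⟨d', hd, w, hw, hwx⟩ := eq_or_exists_adj_of_edist_le h
  · exact .inl rfl
  refine .inr ?_
  obtain rfl | rfl | rfl | rfl := eq_of_adj_inl hm hw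
  · exact .inl ⟨i + 1, by simp, d', hd, hwx⟩
  · exact .inl ⟨i - 1, by simp, d', hd, hwx⟩
  · obtain ⟨q, hq, hxq, hpq⟩ | ⟨e, ⟨he, hpe⟩ | ⟨he, hpe⟩⟩ :=
      eq_cycleVert_or_edist_inl_le_of_edist_cycleVert_le hm (by omega) hwx
    · exact .inr ⟨q, hq, .inl ⟨hxq, by omega⟩⟩
    · exact .inl ⟨i, by simp, e, by omega, he⟩
    · exact .inl ⟨i + 1, by simp, e, by omega, he⟩
  · obtain ⟨q, hq, hxq, hpq⟩ | ⟨e, ⟨he, hpe⟩ | ⟨he, hpe⟩⟩ :=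
      eq_cycleVert_or_edist_inl_le_of_edist_cycleVert_le hm (by omega) hwx
    · exact .inr ⟨q, hq, .inr ⟨hxq, by omega⟩⟩
    · exact .inl ⟨i - 1, by simp, e, by omega, he⟩
    · exact .inl ⟨i, by simp, e, by omega, by rwa [sub_add_cancel] at he⟩

end Distance

section MatchedPos

variable {n m : ℕ} {M : (flowerGraph n m).Subgraph} {i : ZMod n}

open Classical in
/-- The positions `p < m` on the `i`-th petal cycle for which `M`, in applications a perfect
matching of a paired dominating set, contains the edge from the `p`-th to the `(p + 1)`-st vertex.
Every edge of `M` is counted in exactly one petal. -/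
noncomputable def matchedPos (M : (flowerGraph n m).Subgraph) (i : ZMod n) : Finset ℕ :=
  {p ∈ range m | M.Adj (cycleVert i p) (cycleVert i (p + 1))}

theorem mem_matchedPos {p : ℕ} :
    p ∈ matchedPos M i ↔ p < m ∧ M.Adj (cycleVert i p) (cycleVert i (p + 1)) := by
  simp [matchedPos]

theorem two_mul_sum_card_matchedPos_le [NeZero n] (hn : 3 ≤ n) (hm : 3 ≤ m)
    (hM : M.IsMatching) : 2 * ∑ i, #(matchedPos M i) ≤ M.verts.ncard := by
  rw [ncard_verts_eq_two_mul_ncard_edgeSet hM, ← card_sigma, ← Set.ncard_coe_finset]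
  refine Nat.mul_le_mul_left 2 (Set.ncard_le_ncard_of_injOn
    (fun e ↦ s(cycleVert e.1 e.2, cycleVert e.1 (e.2 + 1))) ?_ ?_)
  · exact fun e he ↦ (mem_matchedPos.1 (mem_sigma.1 he).2).2
  · exact (injOn_edge_cycleVert hn hm).mono fun e he ↦ (mem_matchedPos.1 (mem_sigma.1 he).2).1

theorem exists_mem_matchedPos_of_mem_verts (hm : 3 ≤ m) (hM : M.IsMatching)
    {x : FlowerVert n m} (hx : x ∈ M.verts) :
    ∃ i, ∃ s ∈ matchedPos M i, x = cycleVert i s ∨ x = cycleVert i (s + 1) := by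
  obtain ⟨y, hxy, -⟩ := hM hx
  obtain ⟨i, s, hs, hxys⟩ := exists_eq_cycleVert_of_adj hm hxy.adj_sub
  refine ⟨i, s, mem_matchedPos.2 ⟨hs, ?_⟩, ?_⟩
  · rwa [← Subgraph.mem_edgeSet, ← hxys]
  · exact (Sym2.eq_iff.1 hxys).imp And.left And.left

theorem exists_mem_matchedPos_of_cycleVert_mem_verts (hm : 3 ≤ m) (hM : M.IsMatching) {q : ℕ}
    (hq : 0 < q ∧ q < m - 1) (hx : cycleVert i q ∈ M.verts) :
    ∃ s ∈ matchedPos M i, q = s ∨ q = s + 1 := by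
  obtain ⟨j, s, hs, hqs | hqs⟩ := exists_mem_matchedPos_of_mem_verts hm hM hx <;>
    obtain ⟨rfl, rfl⟩ := (cycleVert_eq_cycleVert_iff hq).1 hqs
  exacts [⟨_, hs, .inl rfl⟩, ⟨s, hs, .inr rfl⟩]

theorem exists_mem_matchedPos_of_inl_mem_verts (hm : 3 ≤ m) (hM : M.IsMatching)
    (hx : .inl i ∈ M.verts) :
    ∃ s, s ∈ matchedPos M i ∧ (s = 0 ∨ s = m - 1) ∨
      s ∈ matchedPos M (i - 1) ∧ m - 2 ≤ s := by
  obtain ⟨j, s, hs, hxs | hxs⟩ := exists_mem_matchedPos_of_mem_verts hm hM hx <;>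
    have hsm := (mem_matchedPos.1 hs).1 <;>
    refine ⟨s, ?_⟩ <;>
    obtain ⟨hpos, rfl⟩ | ⟨hpos, hne, rfl⟩ := cycleVert_eq_inl_iff.1 hxs.symm
  · exact .inr ⟨by rwa [add_sub_cancel_right], by omega⟩
  · exact .inl ⟨hs, by omega⟩
  · exact .inr ⟨by rwa [add_sub_cancel_right], by omega⟩
  · exact .inl ⟨hs, by omega⟩

end MatchedPos

section LowerBound

variable {n m r k : ℕ} {M : (flowerGraph n m).Subgraph}

theorem exists_mem_matchedPos_near (hm : 3 ≤ m) (hM : M.IsMatching)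
    (hdom : ∀ v ∉ M.verts, ∃ u ∈ M.verts, (flowerGraph n m).edist u v ≤ r) {i : ZMod n} {d : ℕ}
    (hd : d ≤ r) (hi : ∀ x ∈ M.verts, d ≤ (flowerGraph n m).edist (.inl i) x)
    (hi' : ∀ x ∈ M.verts, d ≤ (flowerGraph n m).edist (.inl (i + 1)) x) {p : ℕ}
    (hp : r + 1 ≤ p + d) (hp' : p + r + 2 ≤ m + d) :
    ∃ s ∈ matchedPos M i, p ≤ s + 1 + r ∧ s ≤ p + r := by
  obtain ⟨x, hx, hxp⟩ : ∃ x ∈ M.verts, (flowerGraph n m).edist (cycleVert i p) x ≤ r := by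
    by_cases hmem : cycleVert i p ∈ M.verts
    · exact ⟨_, hmem, by simp⟩
    · simpa only [edist_comm] using hdom _ hmem
  obtain ⟨q, hq, rfl, hpq⟩ | ⟨e, ⟨he, hpe⟩ | ⟨he, hpe⟩⟩ :=
    eq_cycleVert_or_edist_inl_le_of_edist_cycleVert_le hm (by omega) hxp
  · obtain ⟨s, hs, hqs⟩ := exists_mem_matchedPos_of_cycleVert_mem_verts hm hM hq hx
    exact ⟨s, hs, by omega⟩
  · have : d ≤ e := by exact_mod_cast (hi x hx).trans he
    omega
  · have : d ≤ e := by exact_mod_cast (hi' x hx).trans he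
    omega

theorem le_card_matchedPos (hm : 3 ≤ m) (hM : M.IsMatching)
    (hdom : ∀ v ∉ M.verts, ∃ u ∈ M.verts, (flowerGraph n m).edist u v ≤ r)
    (hk : (2 * r + 2) * k < m) (i : ZMod n) : k ≤ #(matchedPos M i) := by
  rcases le_or_gt m (2 * r + 2) with hmr | hmr
  · have : k < 1 := lt_of_mul_lt_mul_left' (a := 2 * r + 2) (by omega)
    omega
  have hcover := succ_le_add_mul_card_of_cover (a := r + 1) (b := m - (r + 2)) fun p hp hpm ↦
    exists_mem_matchedPos_near hm hM hdom (i := i) (Nat.zero_le r) (by simp) (by simp) hp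
      (by omega)
  have : k < #(matchedPos M i) + 1 :=
    lt_of_mul_lt_mul_left' (a := 2 * r + 2) (by rw [mul_add]; omega)
  omega

theorem bounds_of_mem_matchedPos (hm : m = (2 * r + 2) * k + 2) (hk : 0 < k) (hM : M.IsMatching)
    (hdom : ∀ v ∉ M.verts, ∃ u ∈ M.verts, (flowerGraph n m).edist u v ≤ r) {i : ZMod n} {d : ℕ}
    (hd : d ≤ r) (hi : ∀ x ∈ M.verts, d ≤ (flowerGraph n m).edist (.inl i) x)
    (hi' : ∀ x ∈ M.verts, d ≤ (flowerGraph n m).edist (.inl (i + 1)) x)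
    (hcard : #(matchedPos M i) ≤ k) {s : ℕ} (hs : s ∈ matchedPos M i) :
    d + 1 ≤ s ∧ s + d + 1 ≤ (2 * r + 2) * k := by
  have hwk : 2 * r + 2 ≤ (2 * r + 2) * k := Nat.le_mul_of_pos_right _ hk
  have hwcard := Nat.mul_le_mul_left (2 * r + 2) hcard
  have hcover (p : ℕ) (hp : r + 1 - d ≤ p) (hpm : p ≤ m + d - (r + 2)) :=
    exists_mem_matchedPos_near (by omega) hM hdom hd hi hi' (p := p) (by omega) (by omega)
  have hlow := le_max_add_mul_card_of_cover hcover hs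
  have hupp := min_add_le_add_mul_card_of_cover hcover hs
  omega

theorem add_one_le_edist_inl_of_card_matchedPos_le (hm : m = (2 * r + 2) * k + 2) (hk : 0 < k)
    (hM : M.IsMatching) (hdom : ∀ v ∉ M.verts, ∃ u ∈ M.verts, (flowerGraph n m).edist u v ≤ r)
    {i : ZMod n} {d : ℕ} (hd : d ≤ r)
    (hcard : #(matchedPos M i) ≤ k) (hcard' : #(matchedPos M (i - 1)) ≤ k)
    (hfar : ∀ j, j = i - 1 ∨ j = i ∨ j = i + 1 →
      ∀ y ∈ M.verts, d ≤ (flowerGraph n m).edist (.inl j) y)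
    {x : FlowerVert n m} (hx : x ∈ M.verts) :
    (d + 1 : ℕ) ≤ (flowerGraph n m).edist (.inl i) x := by
  have hm3 : 3 ≤ m := by have := Nat.le_mul_of_pos_right (2 * r + 2) hk; omega
  have hbounds {s : ℕ} (hs : s ∈ matchedPos M i) :=
    bounds_of_mem_matchedPos hm hk hM hdom hd (hfar i (by simp)) (hfar (i + 1) (by simp)) hcard hs
  have hbounds' {s : ℕ} (hs : s ∈ matchedPos M (i - 1)) :=
    bounds_of_mem_matchedPos hm hk hM hdom hd (hfar (i - 1) (by simp)) (hfar _ (by simp)) hcard' hs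
  by_contra! hlt
  rw [Nat.cast_succ, ENat.lt_add_one_iff (ENat.natCast_ne_top d)] at hlt
  obtain rfl | ⟨j, hj, e, hed, he⟩ | ⟨q, hq, ⟨rfl, hqd⟩ | ⟨rfl, hqd⟩⟩ :=
    eq_or_edist_inl_le_or_eq_cycleVert_of_edist_inl_le hm3 hlt
  · obtain ⟨s, ⟨hs, hsm⟩ | ⟨hs, hsm⟩⟩ := exists_mem_matchedPos_of_inl_mem_verts hm3 hM hx
    · have := hbounds hs
      omega
    · have := hbounds' hs
      omega
  · have : d ≤ e := by exact_mod_cast (hfar j hj x hx).trans he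
    omega
  · obtain ⟨s, hs, hqs⟩ := exists_mem_matchedPos_of_cycleVert_mem_verts hm3 hM hq hx
    have := hbounds hs
    omega
  · obtain ⟨s, hs, hqs⟩ := exists_mem_matchedPos_of_cycleVert_mem_verts hm3 hM hq hx
    have := hbounds' hs
    omega

theorem le_edist_inl_of_card_matchedPos_le (hm : m = (2 * r + 2) * k + 2) (hk : 0 < k)
    (hM : M.IsMatching) (hdom : ∀ v ∉ M.verts, ∃ u ∈ M.verts, (flowerGraph n m).edist u v ≤ r)
    {d : ℕ} (hd : d ≤ r + 1) {a : ZMod n}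
    (hcard : ∀ j < 2 * d, #(matchedPos M (a + j)) ≤ k) {x : FlowerVert n m}
    (hx : x ∈ M.verts) : d ≤ (flowerGraph n m).edist (.inl (a + d)) x := by
  induction d generalizing a x with
  | zero => simp
  | succ d ih =>
    have hfar (c : ℕ) (hc : c ≤ 2) {j : ZMod n} (hj : j = a + c + d) :
        ∀ y ∈ M.verts, d ≤ (flowerGraph n m).edist (.inl j) y := fun y hy ↦
      hj ▸ ih (by omega) (fun j hj ↦ by simpa [add_assoc] using hcard (c + j) (by omega)) hy
    have hsub : a + (d + 1 : ℕ) - 1 = a + d := by push_cast; ring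
    refine add_one_le_edist_inl_of_card_matchedPos_le hm hk hM hdom (by omega) (hcard _ (by omega))
      (hsub ▸ hcard d (by omega)) ?_ hx
    rintro j (rfl | rfl | rfl)
    · exact hfar 0 (by omega) (by push_cast; ring)
    · exact hfar 1 (by omega) (by push_cast; ring)
    · exact hfar 2 (by omega) (by push_cast; ring)

theorem exists_lt_card_matchedPos (hm : m = (2 * r + 2) * k + 2) (hk : 0 < k) (hM : M.IsMatching)
    (hdom : ∀ v ∉ M.verts, ∃ u ∈ M.verts, (flowerGraph n m).edist u v ≤ r) (a : ZMod n) :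
    ∃ j < 2 * r + 2, k < #(matchedPos M (a + j)) := by
  by_contra! hcard
  have hfar {x : FlowerVert n m} (hx : x ∈ M.verts) :=
    le_edist_inl_of_card_matchedPos_le hm hk hM hdom le_rfl (fun j hj ↦ hcard j (by omega)) hx
  by_cases hmem : (.inl (a + (r + 1 : ℕ)) : FlowerVert n m) ∈ M.verts
  · simpa using hfar hmem
  · obtain ⟨u, hu, hur⟩ := hdom _ hmem
    have := (hfar hu).trans (edist_comm.trans_le hur)
    norm_cast at this
    omega

theorem mul_add_ceilDiv_le_sum_card_matchedPos [NeZero n] (hm : m = (2 * r + 2) * k + 2)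
    (hk : 0 < k) (hM : M.IsMatching)
    (hdom : ∀ v ∉ M.verts, ∃ u ∈ M.verts, (flowerGraph n m).edist u v ≤ r) :
    n * k + n ⌈/⌉ (2 * r + 2) ≤ ∑ i, #(matchedPos M i) := by
  have hm3 : 3 ≤ m := by have := Nat.le_mul_of_pos_right (2 * r + 2) hk; omega
  set X : Finset (ZMod n) := {i | k < #(matchedPos M i)} with hX
  have hcardX : n ≤ #X * (2 * r + 2) := by
    refine (ZMod.card n).ge.trans <| (card_le_mul_card_of_forall_exists_add_mem
      (S := (range (2 * r + 2)).image Nat.cast) fun a ↦ ?_).trans <|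
      Nat.mul_le_mul_left _ (card_image_le.trans (card_range _).le)
    obtain ⟨j, hj, hlt⟩ := exists_lt_card_matchedPos hm hk hM hdom a
    exact ⟨j, mem_image_of_mem _ (mem_range.2 hj), by simpa [hX] using hlt⟩
  calc n * k + n ⌈/⌉ (2 * r + 2) ≤ n * k + #X :=
        Nat.add_le_add_left ((ceilDiv_le_iff_le_mul (by omega)).2 (by rwa [mul_comm])) _
    _ = ∑ i : ZMod n, (k + if k < #(matchedPos M i) then 1 else 0) := by
        simp [sum_add_distrib, hX]
    _ ≤ ∑ i, #(matchedPos M i) := sum_le_sum fun i _ ↦ by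
        have := le_card_matchedPos hm3 hM hdom (k := k) (by omega) i
        split_ifs <;> omega

end LowerBound

section UpperBound

variable {n m r c k t : ℕ}

/-- The vertices of an optimal dominating set for `m = (2 * r + 2) * k + c + 1`, arranged in
adjacent pairs indexed by `(ZMod n × Fin k) ⊕ Fin t`. The `k` pairs on each petal dominate the
positions from `c` on; for `c = 1` the remaining `t` pairs dominate the hub, the minimum keeping the
last of them from running into the first. -/
def dominatingPair (n m r c k t : ℕ) :
    ((ZMod n × Fin k) ⊕ Fin t) × Bool → FlowerVert n m
  | (.inl (i, q), b) => cycleVert i ((2 * r + 2) * q + r + c + b.toNat)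
  | (.inr s, b) => .inl (min ((2 * r + 2) * s + r) (n - 2) + b.toNat : ℕ)

theorem injective_dominatingPair (hn : 2 ≤ n) (hr : 1 ≤ r) (hm : m = (2 * r + 2) * k + c + 1)
    (ht : ∀ s < t, (2 * r + 2) * s < n) : (dominatingPair n m r c k t).Injective := by
  have hstep {q q' : ℕ} (h : q < q') : (2 * r + 2) * q + (2 * r + 2) ≤ (2 * r + 2) * q' :=
    Nat.mul_le_mul_left (2 * r + 2) h
  have hpetal := injective_add_toNat (g := fun q : Fin k ↦ (2 * r + 2) * q + r + c)
    fun q q' h ↦ by have := hstep h; omega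
  have hhub := injective_add_toNat (g := fun s : Fin t ↦ min ((2 * r + 2) * s + r) (n - 2))
    fun s s' h ↦ by have := hstep h; have := ht s' s'.2; omega
  have hinterior (q : Fin k) (b : Bool) : 0 < (2 * r + 2) * q + r + c + b.toNat ∧
      (2 * r + 2) * q + r + c + b.toNat < m - 1 := by
    have := hstep q.2
    have := b.toNat_le
    omega
  have hlt (s : Fin t) (b : Bool) : min ((2 * r + 2) * s + r) (n - 2) + b.toNat < n := by
    have := b.toNat_le
    omega
  rintro ⟨⟨i, q⟩ | s, b⟩ ⟨⟨i', q'⟩ | s', b'⟩ h <;> simp only [dominatingPair] at h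
  · obtain ⟨rfl, hpos⟩ := (cycleVert_eq_cycleVert_iff (hinterior q b)).1 h
    obtain ⟨rfl, rfl⟩ := Prod.ext_iff.1 (hpetal (a₁ := (q, b)) (a₂ := (q', b')) hpos)
    rfl
  · have := hinterior q b
    have := cycleVert_eq_inl_iff.1 h
    omega
  · have := hinterior q' b'
    have := cycleVert_eq_inl_iff.1 h.symm
    omega
  · have hpos := congrArg ZMod.val (Sum.inl_injective h)
    rw [ZMod.val_natCast_of_lt (hlt s b), ZMod.val_natCast_of_lt (hlt s' b')] at hpos
    obtain ⟨rfl, rfl⟩ := Prod.ext_iff.1 (hhub (a₁ := (s, b)) (a₂ := (s', b')) hpos)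
    rfl

theorem exists_edist_dominatingPair_cycleVert_le (hm : m = (2 * r + 2) * k + c + 1)
    (i : ZMod n) {p : ℕ} (hcp : c ≤ p) (hp : p < m - 1) :
    ∃ x, (flowerGraph n m).edist (dominatingPair n m r c k t x) (cycleVert i p) ≤ r := by
  have hq : (p - c) / (2 * r + 2) < k := Nat.div_lt_of_lt_mul (by omega)
  have hqk : (2 * r + 2) * ((p - c) / (2 * r + 2)) + (2 * r + 2) ≤ (2 * r + 2) * k :=
    Nat.mul_le_mul_left (2 * r + 2) hq
  have hdiv := Nat.div_add_mod (p - c) (2 * r + 2)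
  have hmod := Nat.mod_lt (p - c) (by omega : 0 < 2 * r + 2)
  obtain ⟨b, hb⟩ := exists_edist_add_toNat_le_of_forall_adj_succ (f := cycleVert i) (N := m)
    (a := (2 * r + 2) * ((p - c) / (2 * r + 2)) + r + c) (p := p) (d := r)
    (fun p hp ↦ adj_cycleVert_succ i hp (by omega)) (by omega) (by omega) (by omega) (by omega)
  exact ⟨(.inl (i, ⟨_, hq⟩), b), hb⟩

theorem exists_edist_dominatingPair_inl_le (hn : 2 ≤ n) (hnt : n ≤ (2 * r + 2) * t)
    (j : ZMod n) :
    ∃ x, (flowerGraph n m).edist (dominatingPair n m r c k t x) (.inl j) ≤ r := by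
  have : NeZero n := ⟨by omega⟩
  have hj := j.val_lt
  have hs : j.val / (2 * r + 2) < t := Nat.div_lt_of_lt_mul (by omega)
  have hdiv := Nat.div_add_mod j.val (2 * r + 2)
  have hmod := Nat.mod_lt j.val (by omega : 0 < 2 * r + 2)
  obtain ⟨b, hb⟩ := exists_edist_add_toNat_le_of_forall_adj_succ (G := flowerGraph n m)
    (f := fun p ↦ .inl (p : ZMod n)) (N := n)
    (a := min ((2 * r + 2) * (j.val / (2 * r + 2)) + r) (n - 2)) (p := j.val) (d := r)
    (fun p _ ↦ by rw [Nat.cast_succ]; exact adj_inl_inl_add_one hn _)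
    (by omega) (by omega) (by omega) (by omega)
  rw [ZMod.natCast_zmod_val] at hb
  exact ⟨(.inr ⟨_, hs⟩, b), hb⟩

theorem exists_isKDistPairedDominating_flowerGraph (hn : 2 ≤ n) (hr : 1 ≤ r)
    (hm : m = (2 * r + 2) * k + c + 1) (hm3 : 3 ≤ m) (ht : ∀ s < t, (2 * r + 2) * s < n)
    (hc : c = 0 ∨ c = 1 ∧ n ≤ (2 * r + 2) * t) :
    ∃ D, IsKDistPairedDominating (flowerGraph n m) r D ∧ D.ncard = 2 * (n * k + t) := by
  have : NeZero n := ⟨by omega⟩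
  have hadj (x : (ZMod n × Fin k) ⊕ Fin t) : (flowerGraph n m).Adj
      (dominatingPair n m r c k t (x, false)) (dominatingPair n m r c k t (x, true)) := by
    rcases x with ⟨i, q⟩ | s
    · have : (2 * r + 2) * q + (2 * r + 2) ≤ (2 * r + 2) * k := Nat.mul_le_mul_left (2 * r + 2) q.2
      exact adj_cycleVert_succ (p := (2 * r + 2) * q + r + c) i (by omega) hm3
    · simpa [dominatingPair, ← add_assoc] using adj_inl_inl_add_one (m := m) hn _
  have hdom (v : FlowerVert n m) :
      ∃ x, (flowerGraph n m).edist (dominatingPair n m r c k t x) v ≤ r := by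
    rcases v with j | ⟨i, j⟩
    · obtain rfl | ⟨rfl, hnt⟩ := hc
      · rw [← cycleVert_zero hm3]
        exact exists_edist_dominatingPair_cycleVert_le hm j le_rfl (by omega)
      · exact exists_edist_dominatingPair_inl_le hn hnt j
    · rw [inr_eq_cycleVert]
      exact exists_edist_dominatingPair_cycleVert_le hm i (by omega) (by omega)
  simpa [ZMod.card] using
    exists_isKDistPairedDominating (injective_dominatingPair hn hr hm ht) hadj hdom

end UpperBound

theorem kDistPairedDomNum_eq_of_exists_of_forall_le {V : Type*} {G : SimpleGraph V} {k c : ℕ}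
    (hex : ∃ D, IsKDistPairedDominating G k D ∧ D.ncard = c)
    (hle : ∀ D, IsKDistPairedDominating G k D → c ≤ D.ncard) : kDistPairedDomNum G k = c :=
  IsLeast.csInf_eq ⟨hex, fun _ ⟨D, hD, hcard⟩ ↦ hcard ▸ hle D hD⟩

theorem kDistPairedDomNum_flowerGraph_of_eq_add_one {n m r k : ℕ} (hr : 1 ≤ r) (hn : 3 ≤ n)
    (hm3 : 3 ≤ m) (hm : m = (2 * r + 2) * k + 1) :
    kDistPairedDomNum (flowerGraph n m) r = 2 * (n * k) := by
  have : NeZero n := ⟨by omega⟩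
  have hex := exists_isKDistPairedDominating_flowerGraph (n := n) (t := 0) (by omega) hr hm hm3
    (by simp) (.inl rfl)
  refine kDistPairedDomNum_eq_of_exists_of_forall_le hex ?_
  rintro _ ⟨hdom, M, rfl, hM⟩
  refine (Nat.mul_le_mul_left 2 ?_).trans (two_mul_sum_card_matchedPos_le hn hm3 hM)
  simpa [ZMod.card] using card_nsmul_le_sum univ (fun i ↦ #(matchedPos M i)) k fun i _ ↦
    le_card_matchedPos hm3 hM hdom (by omega) i

theorem kDistPairedDomNum_flowerGraph_of_eq_add_two {n m r k : ℕ} (hr : 1 ≤ r) (hn : 3 ≤ n)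
    (hm3 : 3 ≤ m) (hm : m = (2 * r + 2) * k + 2) :
    kDistPairedDomNum (flowerGraph n m) r = 2 * (n * k + n ⌈/⌉ (2 * r + 2)) := by
  have : NeZero n := ⟨by omega⟩
  have hk : 0 < k := Nat.pos_of_ne_zero fun hk ↦ by rw [hk, mul_zero] at hm; omega
  have hw : 0 < 2 * r + 2 := by omega
  have hlt (s : ℕ) (hs : s < n ⌈/⌉ (2 * r + 2)) : (2 * r + 2) * s < n := by
    rwa [← not_le, ceilDiv_le_iff_le_mul hw, not_le] at hs
  have hex := exists_isKDistPairedDominating_flowerGraph (by omega) hr hm hm3 hlt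
    (.inr ⟨rfl, (ceilDiv_le_iff_le_mul hw).1 le_rfl⟩)
  refine kDistPairedDomNum_eq_of_exists_of_forall_le hex ?_
  rintro _ ⟨hdom, M, rfl, hM⟩
  exact (Nat.mul_le_mul_left 2 (mul_add_ceilDiv_le_sum_card_matchedPos hm hk hM hdom)).trans
    (two_mul_sum_card_matchedPos_le hn hm3 hM)

theorem flower_twoDistPairedDomNum_mod6_12_general (r n m : ℕ) (hr : 1 ≤ r) (hn : 3 ≤ n)
    (hm : 3 ≤ m) (h : m % (2 * r + 2) = 1 ∨ m % (2 * r + 2) = 2) :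
    (kDistPairedDomNum (flowerGraph n m) r : ℤ) = 2 * ⌈((n : ℚ) * m - n) / (2 * r + 2)⌉ := by
  have hw : 0 < 2 * r + 2 := by omega
  have hdiv := Nat.div_add_mod m (2 * r + 2)
  set k := m / (2 * r + 2)
  have hceil : ⌈((n : ℚ) * m - n) / (2 * r + 2)⌉ = ((n * (m - 1)) ⌈/⌉ (2 * r + 2) : ℕ) := by
    rw [← natCeil_natCast_div_natCast (K := ℚ) _ hw, Int.natCast_ceil_eq_ceil (by positivity)]
    push_cast [show 1 ≤ m by omega]
    rw [mul_sub_one]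
  rw [hceil]
  norm_cast
  obtain h | h := h
  · rw [kDistPairedDomNum_flowerGraph_of_eq_add_one hr hn hm (k := k) (by omega),
      show m - 1 = (2 * r + 2) * k by omega, mul_left_comm n (2 * r + 2),
      ← smul_eq_mul (2 * r + 2), smul_ceilDiv hw]
  · rw [kDistPairedDomNum_flowerGraph_of_eq_add_two hr hn hm (k := k) (by omega),
      show m - 1 = (2 * r + 2) * k + 1 by omega, mul_add_one, mul_left_comm,
      mul_add_ceilDiv hw]

theorem flower_twoDistPairedDomNum_mod6_12 (n m : ℕ) (hn : 3 ≤ n) (hm : 3 ≤ m)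
    (h : m % 6 = 1 ∨ m % 6 = 2) :
    (kDistPairedDomNum (flowerGraph n m) 2 : ℤ) = 2 * ⌈((n : ℚ) * m - n) / 6⌉ := by
  convert flower_twoDistPairedDomNum_mod6_12_general 2 n m (by norm_num) hn hm h using 4
  norm_num
end
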